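/- arXiv:0712.0731 — 3 statements merged into one kernel-verified Lean document; each statement's English description precedes it below -/
import Mathlib

section
/- Let Ω be a C¹ bounded domain satisfying the interior sphere condition, let F satisfy (F1), (F2), (F3), let b and c be bounded and continuous on Ω, and let f : ∂Ω × ℝ → ℝ satisfy f(x,0) ≥ 0 for all x ∈ ∂Ω. If u ∈ USC(Ω̄) is a non-positive viscosity subsolution of F(x,Du,D²u) + b(x)·Du|Du|^α + c(x)|u|^α u = 0 in Ω with boundary condition f(x,u) + ⟨Du, n(x)⟩ = 0 on ∂Ω, then either u ≡ 0 in Ω̄ or u < 0 in Ω̄. -/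
/-!
Strong maximum principle by Hopf's method. Inside a ball `B(y,R) ⊆ Ω` on which `u < 0` and whose
boundary sphere carries a point `x₀` with `u x₀ = 0`, the barrier
`φ(x) = ε (e^{-kR²} - e^{-k|x-y|²})` is, for `k` large, a strict supersolution of the equation on
the annulus `R/2 ≤ |x-y| ≤ R` (`barrier_strict`). The zero-order term is harmless: where `u > φ`
one has `|u| ≤ |φ|`, so that `c|u|^α u` is of the order `E^{1+α}` with `E = ε e^{-k|x-y|²}`, which
the second-order part beats by a factor `k`. Since `u` is a subsolution this forces `u ≤ φ` on
the annulus, and as `φ ≥ 0 ≥ u` outside the ball, `φ` touches `u` from above at `x₀`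
(`hopf_touching`).

If `x₀ ∈ Ω` this contradicts the interior inequality at `x₀`; such a ball exists whenever `u` is
neither identically zero nor everywhere negative in the connected set `Ω`
(`exists_touching_ball`). If `u < 0` in `Ω` and `x₀ ∈ ∂Ω`, the interior sphere supplies the ball,
the gradient of `φ` at `x₀` has positive normal component (`inner_gradient_pos`), and both entries
of the minimum in the boundary condition are positive, again a contradiction. If `u ≡ 0` in `Ω`,
upper semicontinuity extends this to the closure.
-/

open Filter Set Metric
open scoped RealInnerProductSpace Topology NNReal

noncomputable section

/-- Euclidean space `ℝ^N`. -/
abbrev EN (N : ℕ) := EuclideanSpace ℝ (Fin N)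

/-- The space of `N × N` real matrices. -/
abbrev Mat (N : ℕ) := Matrix (Fin N) (Fin N) ℝ

/-- Operator (spectral) norm of a matrix, viewed as a linear map on Euclidean space. -/
noncomputable def matNorm {N : ℕ} (X : Mat N) : ℝ :=
  ‖LinearMap.toContinuousLinearMap (Matrix.toEuclideanLin X)‖

/-- The Hessian matrix of `φ : ℝ^N → ℝ` at `x`. -/
noncomputable def hess {N : ℕ} (φ : EN N → ℝ) (x : EN N) : Mat N :=
  Matrix.of fun i j =>
    iteratedFDeriv ℝ 2 φ x ![EuclideanSpace.single i 1, EuclideanSpace.single j 1]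

/-- `ρ` is a `C²` defining function for the domain `Ω` with exterior unit normal `nv`. -/
def IsC2DefiningFun {N : ℕ} (Ω : Set (EN N)) (nv : EN N → EN N) (ρ : EN N → ℝ) : Prop :=
  ContDiff ℝ 2 ρ ∧ Ω = {x | ρ x < 0} ∧ frontier Ω = {x | ρ x = 0} ∧
    ∀ x ∈ frontier Ω, gradient ρ x ≠ 0 ∧ nv x = ‖gradient ρ x‖⁻¹ • gradient ρ x

/-- `Ω` is a bounded domain of class `C²` with exterior unit normal `nv` on `∂Ω`. -/
def IsC2Domain {N : ℕ} (Ω : Set (EN N)) (nv : EN N → EN N) : Prop :=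
  IsOpen Ω ∧ IsConnected Ω ∧ Bornology.IsBounded Ω ∧ ∃ ρ : EN N → ℝ, IsC2DefiningFun Ω nv ρ

/-- `Ω` is a bounded domain of class `C¹` with exterior unit normal `nv` on `∂Ω`. -/
def IsC1Domain {N : ℕ} (Ω : Set (EN N)) (nv : EN N → EN N) : Prop :=
  IsOpen Ω ∧ IsConnected Ω ∧ Bornology.IsBounded Ω ∧
    ∃ ρ : EN N → ℝ, ContDiff ℝ 1 ρ ∧ Ω = {x | ρ x < 0} ∧ frontier Ω = {x | ρ x = 0} ∧
      ∀ x ∈ frontier Ω, gradient ρ x ≠ 0 ∧ nv x = ‖gradient ρ x‖⁻¹ • gradient ρ x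

/-- Interior sphere condition (Ω1). -/
def InteriorSphereCond {N : ℕ} (Ω : Set (EN N)) : Prop :=
  ∀ x ∈ frontier Ω, ∃ R > (0 : ℝ), ∃ y ∈ Ω, ‖x - y‖ = R ∧ Metric.ball y R ⊆ Ω

/-- (F1): homogeneity of `F`. -/
def CondF1 {N : ℕ} (Ω : Set (EN N)) (α : ℝ) (F : EN N → EN N → Mat N → ℝ) : Prop :=
  ∀ x ∈ closure Ω, ∀ t : ℝ, t ≠ 0 → ∀ μ : ℝ, 0 ≤ μ → ∀ p : EN N, p ≠ 0 → ∀ X : Mat N,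
    X.IsSymm → F x (t • p) (μ • X) = |t| ^ α * μ * F x p X

/-- (F2): uniform ellipticity of `F` with ellipticity constants `0 < a ≤ A`. -/
def CondF2 {N : ℕ} (Ω : Set (EN N)) (α a A : ℝ) (F : EN N → EN N → Mat N → ℝ) : Prop :=
  0 < a ∧ a ≤ A ∧ ∀ x ∈ closure Ω, ∀ p : EN N, p ≠ 0 → ∀ M P : Mat N, M.IsSymm →
    P.PosSemidef →
      a * ‖p‖ ^ α * P.trace ≤ F x p (M + P) - F x p M ∧
      F x p (M + P) - F x p M ≤ A * ‖p‖ ^ α * P.trace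

/-- (F3): Hölder continuity of `F` in the `x` variable. -/
def CondF3 {N : ℕ} (Ω : Set (EN N)) (α C₁ θ : ℝ) (F : EN N → EN N → Mat N → ℝ) : Prop :=
  0 < C₁ ∧ θ ∈ Set.Ioc (1/2 : ℝ) 1 ∧ ∀ x ∈ closure Ω, ∀ y ∈ closure Ω, ∀ p : EN N, p ≠ 0 →
    ∀ X : Mat N, X.IsSymm → |F x p X - F y p X| ≤ C₁ * ‖x - y‖ ^ θ * ‖p‖ ^ α * matNorm X

/-- (F4): Hölder continuity of `F` in the gradient variable. -/
def CondF4 {N : ℕ} (Ω : Set (EN N)) (α C₂ ν : ℝ) (F : EN N → EN N → Mat N → ℝ) : Prop :=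
  0 < C₂ ∧ ν ∈ Set.Ioc (1/2 : ℝ) 1 ∧ ∀ x ∈ closure Ω, ∀ p : EN N, p ≠ 0 → ∀ q : EN N,
    ‖q‖ ≤ ‖p‖ / 2 → ∀ X : Mat N, X.IsSymm →
      |F x (p + q) X - F x p X| ≤ C₂ * ‖p‖ ^ (α - ν) * ‖q‖ ^ ν * matNorm X

/-- The Neumann boundary operator `B(x,r,p) = ⟨p, n(x)⟩`. -/
def BNeu {N : ℕ} (nv : EN N → EN N) : EN N → ℝ → EN N → ℝ := fun x _ p => ⟪p, nv x⟫

/-- Viscosity subsolution of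
`F(x,Du,D²u) + b(x)·Du |Du|^α + c₀(x, u) = g(x)` in `Ω`, `B(x,u,Du) = 0` on `∂Ω`. -/
def IsSubSol {N : ℕ} (Ω : Set (EN N)) (F : EN N → EN N → Mat N → ℝ) (b : EN N → EN N)
    (α : ℝ) (c₀ : EN N → ℝ → ℝ) (g : EN N → ℝ) (B : EN N → ℝ → EN N → ℝ)
    (u : EN N → ℝ) : Prop :=
  (∀ x₀ ∈ Ω, ∀ φ : EN N → ℝ, ContDiff ℝ 2 φ →
      IsLocalMaxOn (fun x => u x - φ x) (closure Ω) x₀ → gradient φ x₀ ≠ 0 →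
      g x₀ ≤ F x₀ (gradient φ x₀) (hess φ x₀)
        + ⟪b x₀, gradient φ x₀⟫ * ‖gradient φ x₀‖ ^ α + c₀ x₀ (u x₀)) ∧
  (∀ x₀ ∈ Ω, ∀ k : ℝ, (∀ᶠ x in nhdsWithin x₀ (closure Ω), u x = k) → g x₀ ≤ c₀ x₀ k) ∧
  (∀ x₀ ∈ frontier Ω, ∀ φ : EN N → ℝ, ContDiff ℝ 2 φ →
      IsLocalMaxOn (fun x => u x - φ x) (closure Ω) x₀ → gradient φ x₀ ≠ 0 →
      min (g x₀ - (F x₀ (gradient φ x₀) (hess φ x₀)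
          + ⟪b x₀, gradient φ x₀⟫ * ‖gradient φ x₀‖ ^ α + c₀ x₀ (u x₀)))
        (B x₀ (u x₀) (gradient φ x₀)) ≤ 0) ∧
  (∀ x₀ ∈ frontier Ω, ∀ k : ℝ, (∀ᶠ x in nhdsWithin x₀ (closure Ω), u x = k) →
      min (g x₀ - c₀ x₀ k) (B x₀ k 0) ≤ 0)

/-- Viscosity supersolution of
`F(x,Dv,D²v) + b(x)·Dv |Dv|^α + c₀(x, v) = g(x)` in `Ω`, `B(x,v,Dv) = 0` on `∂Ω`. -/
def IsSuperSol {N : ℕ} (Ω : Set (EN N)) (F : EN N → EN N → Mat N → ℝ) (b : EN N → EN N)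
    (α : ℝ) (c₀ : EN N → ℝ → ℝ) (g : EN N → ℝ) (B : EN N → ℝ → EN N → ℝ)
    (v : EN N → ℝ) : Prop :=
  (∀ x₀ ∈ Ω, ∀ φ : EN N → ℝ, ContDiff ℝ 2 φ →
      IsLocalMinOn (fun x => v x - φ x) (closure Ω) x₀ → gradient φ x₀ ≠ 0 →
      F x₀ (gradient φ x₀) (hess φ x₀)
        + ⟪b x₀, gradient φ x₀⟫ * ‖gradient φ x₀‖ ^ α + c₀ x₀ (v x₀) ≤ g x₀) ∧
  (∀ x₀ ∈ Ω, ∀ k : ℝ, (∀ᶠ x in nhdsWithin x₀ (closure Ω), v x = k) → c₀ x₀ k ≤ g x₀) ∧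
  (∀ x₀ ∈ frontier Ω, ∀ φ : EN N → ℝ, ContDiff ℝ 2 φ →
      IsLocalMinOn (fun x => v x - φ x) (closure Ω) x₀ → gradient φ x₀ ≠ 0 →
      0 ≤ max (g x₀ - (F x₀ (gradient φ x₀) (hess φ x₀)
          + ⟪b x₀, gradient φ x₀⟫ * ‖gradient φ x₀‖ ^ α + c₀ x₀ (v x₀)))
        (B x₀ (v x₀) (gradient φ x₀))) ∧
  (∀ x₀ ∈ frontier Ω, ∀ k : ℝ, (∀ᶠ x in nhdsWithin x₀ (closure Ω), v x = k) →
      0 ≤ max (g x₀ - c₀ x₀ k) (B x₀ k 0))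

/-- The admissible set for the principal eigenvalue `λ̄`:
all `λ` such that there is a bounded positive supersolution of
`G(x,v,Dv,D²v) + λ v^{α+1} ≤ 0` in `Ω`, `⟨Dv, n⟩ ≥ 0` on `∂Ω`. -/
def lamBarSet {N : ℕ} (Ω : Set (EN N)) (nv : EN N → EN N) (F : EN N → EN N → Mat N → ℝ)
    (b : EN N → EN N) (c : EN N → ℝ) (α : ℝ) : Set ℝ :=
  {lam | ∃ v : EN N → ℝ, LowerSemicontinuousOn v (closure Ω) ∧
    (∀ x ∈ closure Ω, 0 < v x) ∧ (∃ M, ∀ x ∈ closure Ω, v x ≤ M) ∧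
    IsSuperSol Ω F b α (fun x r => (c x + lam) * |r| ^ α * r) (fun _ => 0) (BNeu nv) v}

/-- The admissible set for the principal eigenvalue `λ̲`:
all `λ` such that there is a bounded negative subsolution of
`G(x,u,Du,D²u) + λ |u|^α u ≥ 0` in `Ω`, `⟨Du, n⟩ ≤ 0` on `∂Ω`. -/
def lamLowSet {N : ℕ} (Ω : Set (EN N)) (nv : EN N → EN N) (F : EN N → EN N → Mat N → ℝ)
    (b : EN N → EN N) (c : EN N → ℝ) (α : ℝ) : Set ℝ :=
  {lam | ∃ u : EN N → ℝ, UpperSemicontinuousOn u (closure Ω) ∧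
    (∀ x ∈ closure Ω, u x < 0) ∧ (∃ M, ∀ x ∈ closure Ω, M ≤ u x) ∧
    IsSubSol Ω F b α (fun x r => (c x + lam) * |r| ^ α * r) (fun _ => 0) (BNeu nv) u}

/-! ### The exponential barrier -/

/-- The Hopf barrier `ε (e^{-kR²} - e^{-k|x-y|²})`. For `k, ε > 0` it is negative inside the ball `B(y,R)`, zero on its
boundary, positive outside, with gradient pointing away from `y`. -/
def barrier {N : ℕ} (y : EN N) (R k ε : ℝ) (x : EN N) : ℝ :=
  ε * (Real.exp (-k * R ^ 2) - Real.exp (-k * ‖x - y‖ ^ 2))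

lemma contDiff_barrier {N : ℕ} (y : EN N) (R k ε : ℝ) : ContDiff ℝ 2 (barrier y R k ε) := by
  unfold barrier
  have h : ContDiff ℝ 2 (fun x : EN N => ‖x - y‖ ^ 2) :=
    (contDiff_id.sub contDiff_const).norm_sq ℝ
  exact contDiff_const.mul (contDiff_const.sub (contDiff_const.mul h).exp)

lemma hasFDerivAt_exp_aux {N : ℕ} (y : EN N) (k : ℝ) (x : EN N) :
    HasFDerivAt (fun x : EN N => Real.exp (-k * ‖x - y‖ ^ 2))
      ((-(2 * k * Real.exp (-k * ‖x - y‖ ^ 2))) • innerSL ℝ (x - y)) x := by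
  have h1 : HasFDerivAt (fun x : EN N => x - y) (ContinuousLinearMap.id ℝ (EN N)) x :=
    (hasFDerivAt_id x).sub_const y
  have h2 := ((h1.norm_sq).const_mul (-k)).exp
  refine h2.congr_fderiv (ContinuousLinearMap.ext fun v => ?_)
  simp
  ring

lemma hasFDerivAt_barrier {N : ℕ} (y : EN N) (R k ε : ℝ) (x : EN N) :
    HasFDerivAt (barrier y R k ε)
      ((2 * k * (ε * Real.exp (-k * ‖x - y‖ ^ 2))) • innerSL ℝ (x - y)) x := by
  have h := ((hasFDerivAt_exp_aux y k x).const_sub (Real.exp (-k * R ^ 2))).const_mul ε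
  refine h.congr_fderiv (ContinuousLinearMap.ext fun v => ?_)
  simp
  ring

lemma gradient_barrier {N : ℕ} (y : EN N) (R k ε : ℝ) (x : EN N) :
    gradient (barrier y R k ε) x
      = (2 * k * (ε * Real.exp (-k * ‖x - y‖ ^ 2))) • (x - y) := by
  apply HasGradientAt.gradient
  rw [hasGradientAt_iff_hasFDerivAt]
  refine (hasFDerivAt_barrier y R k ε x).congr_fderiv (ContinuousLinearMap.ext fun v => ?_)
  simp

/-- The formula `D²φ = 2kE·I - 4k²E (x-y)⊗(x-y)` with `E = ε e^{-k|x-y|²}`, written additively so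
that both rank-one and identity parts appear as positive semidefinite increments. -/
lemma hess_barrier {N : ℕ} (y : EN N) (R k ε : ℝ) (x : EN N) :
    hess (barrier y R k ε) x
        + (4 * k ^ 2 * (ε * Real.exp (-k * ‖x - y‖ ^ 2))) •
          Matrix.vecMulVec (x - y).ofLp (star (x - y).ofLp)
      = (2 * k * (ε * Real.exp (-k * ‖x - y‖ ^ 2))) • (1 : Mat N) := by
  have hfd : fderiv ℝ (barrier y R k ε) = fun x =>
      (2 * k * (ε * Real.exp (-k * ‖x - y‖ ^ 2))) • innerSL ℝ (x - y) := by
    funext z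
    exact (hasFDerivAt_barrier y R k ε z).fderiv
  have h1 : HasFDerivAt (fun x : EN N => innerSL ℝ (x - y)) (innerSL ℝ : EN N →L[ℝ] _) x := by
    have := (innerSL ℝ : EN N →L[ℝ] _).hasFDerivAt.comp x ((hasFDerivAt_id x).sub_const y)
    exact this
  have h2 := (((hasFDerivAt_exp_aux y k x).const_mul ε).const_mul (2 * k)).smul h1
  have h3 := h2.fderiv
  change fderiv ℝ (fun x => (2 * k * (ε * Real.exp (-k * ‖x - y‖ ^ 2))) •
    innerSL ℝ (x - y)) x = _ at h3
  rw [← hfd] at h3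
  ext i j
  simp only [Matrix.add_apply, hess, Matrix.of_apply, iteratedFDeriv_two_apply]
  rw [h3]
  have hone : (innerSL ℝ (EuclideanSpace.single i (1 : ℝ))) (EuclideanSpace.single j (1 : ℝ))
      = (1 : Mat N) i j := by
    rw [innerSL_apply_apply, EuclideanSpace.inner_single_left, Matrix.one_apply]
    simp
  simp [Matrix.vecMulVec_apply, EuclideanSpace.inner_single_right, hone]
  ring

lemma hess_barrier_isSymm {N : ℕ} (y : EN N) (R k ε : ℝ) (x : EN N) :
    (hess (barrier y R k ε) x).IsSymm := by
  rw [eq_sub_of_add_eq (hess_barrier y R k ε x)]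
  ext i j
  simp [Matrix.vecMulVec_apply, Matrix.one_apply, eq_comm, mul_comm]

/-- Upper bound for the second-order part on the barrier, negative once `k |x-y|²` is large:
ellipticity is used once to compare `D²φ` with `2kE·I` (where `E = ε e^{-k|x-y|²}`) and
once to compare `2kE·I` with `0`, at which `F` vanishes by homogeneity. -/
lemma F_barrier_le {N : ℕ} {Ω : Set (EN N)} {α a A : ℝ} {F : EN N → EN N → Mat N → ℝ}
    (hF1 : CondF1 Ω α F) (hF2 : CondF2 Ω α a A F) (y : EN N) (R k ε : ℝ) (hk : 0 < k)
    (hε : 0 < ε) (x : EN N) (hx : x ∈ closure Ω) (p : EN N) (hp : p ≠ 0) :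
    F x p (hess (barrier y R k ε) x) ≤
      ‖p‖ ^ α * (2 * k * (ε * Real.exp (-k * ‖x - y‖ ^ 2))) *
        (A * N - 2 * a * k * ‖x - y‖ ^ 2) := by
  obtain ⟨ha, -, hell⟩ := hF2
  set E := ε * Real.exp (-k * ‖x - y‖ ^ 2) with hE
  have hEpos : 0 < E := by positivity
  have hzero : F x p 0 = 0 := by
    have := hF1 x hx 1 one_ne_zero 0 le_rfl p hp 0 Matrix.isSymm_zero
    simpa using this
  have hP1 : ((2 * k * E) • (1 : Mat N)).PosSemidef :=
    Matrix.PosSemidef.one.smul (by positivity)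
  have hP2 : ((4 * k ^ 2 * E) •
      Matrix.vecMulVec (x - y).ofLp (star (x - y).ofLp) : Mat N).PosSemidef :=
    (Matrix.posSemidef_vecMulVec_self_star _).smul (by positivity)
  have e1 := (hell x hx p hp 0 _ Matrix.isSymm_zero hP1).2
  have e2 := (hell x hx p hp _ _ (hess_barrier_isSymm y R k ε x) hP2).1
  rw [hess_barrier y R k ε x, ← hE] at e2
  have htr : (x - y).ofLp ⬝ᵥ star (x - y).ofLp = ‖x - y‖ ^ 2 := by
    rw [EuclideanSpace.norm_sq_eq]
    simp [dotProduct, ← sq]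
  rw [Matrix.trace_smul, Matrix.trace_vecMulVec, htr] at e2
  rw [zero_add, hzero, Matrix.trace_smul, Matrix.trace_one, Fintype.card_fin] at e1
  simp only [smul_eq_mul] at e1 e2
  nlinarith [e1, e2]

/-- For `k` large the barrier is a strict supersolution of the full equation on the annulus
`R/2 ≤ |x-y| ≤ R`, even with an extra zero-order term of size `C E^{1+α}`. The condition
`1 ≤ k R` gives `2k|x-y| ≥ 1`, hence `(2k|x-y|)^{-α} ≤ 2k|x-y|` because `α > -1`. -/
lemma barrier_strict {N : ℕ} {Ω : Set (EN N)} {α a A : ℝ} (hα : -1 < α)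
    {F : EN N → EN N → Mat N → ℝ} (hF1 : CondF1 Ω α F) (hF2 : CondF2 Ω α a A F)
    (y : EN N) (R k ε B C : ℝ) (hR : 0 < R) (hε : 0 < ε) (hB : 0 ≤ B) (hC : 0 ≤ C)
    (hk1 : 1 ≤ k * R) (hk2 : A * N + (B + C) * R < 2 * a * k * (R / 2) ^ 2)
    (x : EN N) (hx : x ∈ closure Ω) (hx1 : R / 2 ≤ ‖x - y‖) (hx2 : ‖x - y‖ ≤ R)
    (β : EN N) (hβ : ‖β‖ ≤ B) :
    gradient (barrier y R k ε) x ≠ 0 ∧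
    F x (gradient (barrier y R k ε) x) (hess (barrier y R k ε) x)
      + ⟪β, gradient (barrier y R k ε) x⟫ * ‖gradient (barrier y R k ε) x‖ ^ α
      + C * (ε * Real.exp (-k * ‖x - y‖ ^ 2)) ^ (1 + α) < 0 := by
  have hk : 0 < k := by
    by_contra h
    nlinarith [not_lt.1 h]
  have ha := hF2.1
  have hgr := gradient_barrier y R k ε x
  set p := gradient (barrier y R k ε) x with hp
  set r := ‖x - y‖ with hr
  have hr0 : 0 < r := by linarith
  set E := ε * Real.exp (-k * r ^ 2) with hE
  have hEpos : 0 < E := by positivity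
  have hpn : ‖p‖ = 2 * k * r * E := by
    rw [hgr, norm_smul, Real.norm_of_nonneg (by positivity), ← hr]
    ring
  have hppos : 0 < ‖p‖ := by rw [hpn]; positivity
  have hp0 : p ≠ 0 := norm_pos_iff.1 hppos
  refine ⟨hp0, ?_⟩
  have h1 := F_barrier_le hF1 hF2 y R k ε hk hε x hx p hp0
  rw [← hr, ← hE] at h1
  have hpa : 0 < ‖p‖ ^ α := Real.rpow_pos_of_pos hppos _
  have h2 : ⟪β, p⟫ * ‖p‖ ^ α ≤ ‖p‖ ^ α * (2 * k * E) * (B * r) := by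
    have : ⟪β, p⟫ ≤ B * ‖p‖ :=
      (real_inner_le_norm β p).trans (mul_le_mul_of_nonneg_right hβ hppos.le)
    calc ⟪β, p⟫ * ‖p‖ ^ α ≤ (B * ‖p‖) * ‖p‖ ^ α := mul_le_mul_of_nonneg_right this hpa.le
      _ = _ := by
        have : B * ‖p‖ = B * (2 * k * r * E) := by rw [hpn]
        rw [this]; ring
  have h3 : E ^ (1 + α) ≤ ‖p‖ ^ α * (2 * k * E) * r := by
    have hs : 1 ≤ 2 * k * r := by nlinarith
    have hs0 : 0 < 2 * k * r := by positivity
    calc E ^ (1 + α) = 1 * E ^ (1 + α) := by ring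
      _ ≤ (2 * k * r) ^ (1 + α) * E ^ (1 + α) := by
        gcongr
        exact Real.one_le_rpow hs (by linarith)
      _ = (2 * k * r * E) ^ (1 + α) := (Real.mul_rpow hs0.le hEpos.le).symm
      _ = ‖p‖ ^ (1 + α) := by rw [hpn]
      _ = ‖p‖ * ‖p‖ ^ α := by rw [Real.rpow_add hppos, Real.rpow_one]
      _ = (2 * k * r * E) * ‖p‖ ^ α := by congr 1
      _ = _ := by ring
  have h4 := mul_le_mul_of_nonneg_left h3 hC
  have h5 : A * N - 2 * a * k * r ^ 2 + B * r + C * r < 0 := by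
    have : (R / 2) ^ 2 ≤ r ^ 2 := by gcongr
    have h6 : 2 * a * k * (R / 2) ^ 2 ≤ 2 * a * k * r ^ 2 := by gcongr
    have h7 : (B + C) * r ≤ (B + C) * R := by gcongr
    linarith
  have h8 : ‖p‖ ^ α * (2 * k * E) * (A * N - 2 * a * k * r ^ 2 + B * r + C * r) < 0 :=
    mul_neg_of_pos_of_neg (by positivity) h5
  linarith

/-! ### Hopf's lemma in viscosity form -/

/-- If `u < 0` in a ball `B(y,R) ⊆ Ω` and `u` vanishes at a point `x₀` of its boundary, then a
strict supersolution touches `u` from above at `x₀`, with gradient in the direction `x₀ - y`.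
The vector `b x₀` enters the bound `B` separately since `x₀` may lie outside `Ω`. -/
lemma hopf_touching {N : ℕ} {Ω : Set (EN N)} {α a A : ℝ} (hα : -1 < α)
    {F : EN N → EN N → Mat N → ℝ} (hF1 : CondF1 Ω α F) (hF2 : CondF2 Ω α a A F)
    (b : EN N → EN N) (c : EN N → ℝ)
    (hb : ∃ M, ∀ x ∈ Ω, ‖b x‖ ≤ M) (hcb : ∃ M, ∀ x ∈ Ω, |c x| ≤ M)
    (u : EN N → ℝ) (husc : UpperSemicontinuousOn u (closure Ω))
    (hu0 : ∀ x ∈ closure Ω, u x ≤ 0)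
    (hint : ∀ x₀ ∈ Ω, ∀ φ : EN N → ℝ, ContDiff ℝ 2 φ →
      IsLocalMaxOn (fun x => u x - φ x) (closure Ω) x₀ → gradient φ x₀ ≠ 0 →
      0 ≤ F x₀ (gradient φ x₀) (hess φ x₀)
        + ⟪b x₀, gradient φ x₀⟫ * ‖gradient φ x₀‖ ^ α + c x₀ * |u x₀| ^ α * u x₀)
    (x₀ : EN N) (hx₀ : x₀ ∈ closure Ω) (hux₀ : u x₀ = 0) (y₁ : EN N) (R₁ : ℝ) (hR₁ : 0 < R₁)
    (hxy : ‖x₀ - y₁‖ = R₁) (hball : ball y₁ R₁ ⊆ Ω) (hneg : ∀ x ∈ ball y₁ R₁, u x < 0) :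
    ∃ φ : EN N → ℝ, ContDiff ℝ 2 φ ∧ IsLocalMaxOn (fun x => u x - φ x) (closure Ω) x₀ ∧
      gradient φ x₀ ≠ 0 ∧ (∃ t > (0 : ℝ), gradient φ x₀ = t • (x₀ - y₁)) ∧
      F x₀ (gradient φ x₀) (hess φ x₀)
        + ⟪b x₀, gradient φ x₀⟫ * ‖gradient φ x₀‖ ^ α < 0 := by
  obtain ⟨Mb, hMb⟩ := hb
  obtain ⟨Mc, hMc⟩ := hcb
  -- Halving the ball towards `x₀` makes `x₀` its only boundary point outside `B(y₁,R₁)`.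
  set y : EN N := (1 / 2 : ℝ) • (x₀ + y₁) with hy
  set R := R₁ / 2 with hRdef
  have hR : 0 < R := by positivity
  have hx₀y : x₀ - y = (1 / 2 : ℝ) • (x₀ - y₁) := by
    rw [hy]; module
  have hyy₁ : y - y₁ = (1 / 2 : ℝ) • (x₀ - y₁) := by
    rw [hy]; module
  have hn0 : ‖x₀ - y‖ = R := by
    rw [hx₀y, norm_smul, hxy, hRdef]; norm_num; ring
  have hn1 : ‖y - y₁‖ = R := by
    rw [hyy₁, norm_smul, hxy, hRdef]; norm_num; ring
  have hin : ∀ x, ‖x - y‖ ≤ R → x ≠ x₀ → x ∈ ball y₁ R₁ := by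
    intro x hx hne
    rw [mem_ball, dist_eq_norm]
    have hle : ‖x - y₁‖ ≤ ‖x - y‖ + ‖y - y₁‖ := by
      simpa using norm_add_le (x - y) (y - y₁)
    rcases lt_or_eq_of_le (show ‖x - y₁‖ ≤ R₁ by linarith) with h | h
    · exact h
    · -- Equality in the triangle inequality forces `x = x₀` by strict convexity.
      exfalso
      apply hne
      have hxR : ‖x - y‖ = R := by linarith
      have hsum : ‖(x - y) + (y - y₁)‖ = ‖x - y‖ + ‖y - y₁‖ := by
        rw [sub_add_sub_cancel, h]; linarith
      have := (sameRay_iff_norm_add.2 hsum).norm_smul_eq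
      rw [hxR, hn1] at this
      have h3 : y - y₁ = x - y := smul_right_injective _ hR.ne' this
      have h4 : x - y = x₀ - y := by rw [← h3, hyy₁, hx₀y]
      exact sub_left_injective h4
  have hinΩ : ∀ x, ‖x - y‖ ≤ R → x ≠ x₀ → x ∈ Ω := fun x hx hne => hball (hin x hx hne)
  have hincl : ∀ x, ‖x - y‖ ≤ R → x ∈ closure Ω := by
    intro x hx
    by_cases h : x = x₀
    · rwa [h]
    · exact subset_closure (hinΩ x hx h)
  obtain ⟨z₁, hz₁, hmax₁⟩ := UpperSemicontinuousOn.exists_isMaxOn (f := u)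
    (s := closedBall y (R / 2)) ⟨y, mem_closedBall_self (by positivity)⟩
    (isCompact_closedBall _ _) (husc.mono fun x hx => hincl x (by
      rw [mem_closedBall, dist_eq_norm] at hx; linarith))
  have huz₁ : u z₁ < 0 := by
    rw [mem_closedBall, dist_eq_norm] at hz₁
    apply hneg z₁ (hin z₁ (by linarith) _)
    rintro rfl
    linarith
  set B := max (max Mb ‖b x₀‖) 0 with hBdef
  set C := max Mc 0 with hCdef
  have hB : 0 ≤ B := le_max_right _ _
  have hC : 0 ≤ C := le_max_right _ _
  have ha := hF2.1
  obtain ⟨k, hk1, hk2⟩ : ∃ k : ℝ, 1 ≤ k * R ∧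
      A * N + (B + C) * R < 2 * a * k * (R / 2) ^ 2 := by
    have t1 : Tendsto (fun k : ℝ => k * R) atTop atTop := tendsto_id.atTop_mul_const hR
    have t2 : Tendsto (fun k : ℝ => k * (2 * a * (R / 2) ^ 2)) atTop atTop :=
      tendsto_id.atTop_mul_const (by positivity)
    obtain ⟨k, h1, h2⟩ := ((t1.eventually_ge_atTop 1).and
      (t2.eventually_gt_atTop (A * N + (B + C) * R))).exists
    exact ⟨k, h1, by linarith⟩
  have hk : 0 < k := by
    by_contra h
    nlinarith [not_lt.1 h]
  -- With `ε = -u z₁` the barrier dominates `u` on the inner sphere, since `φ ≥ -ε` everywhere.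
  set ε := -u z₁ with hεdef
  have hε : 0 < ε := by linarith
  set φ := barrier y R k ε with hφ
  have hφc : ContDiff ℝ 2 φ := contDiff_barrier y R k ε
  have hlow : ∀ x, -(ε * Real.exp (-k * ‖x - y‖ ^ 2)) ≤ φ x := by
    intro x
    have : 0 < ε * Real.exp (-k * R ^ 2) := by positivity
    simp only [hφ, barrier, mul_sub]
    linarith
  have hout : ∀ x, R ≤ ‖x - y‖ → 0 ≤ φ x := by
    intro x hx
    have : Real.exp (-k * ‖x - y‖ ^ 2) ≤ Real.exp (-k * R ^ 2) := by
      apply Real.exp_le_exp.2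
      have : R ^ 2 ≤ ‖x - y‖ ^ 2 := by gcongr
      nlinarith
    exact mul_nonneg hε.le (by linarith)
  have hcomp : ∀ x, R / 2 ≤ ‖x - y‖ → ‖x - y‖ ≤ R → u x ≤ φ x := by
    set K : Set (EN N) := {x | R / 2 ≤ ‖x - y‖} ∩ closedBall y R with hK
    have hKc : IsCompact K :=
      (isCompact_closedBall y R).inter_left
        (isClosed_le continuous_const (continuous_id.sub continuous_const).norm)
    have hKsub : K ⊆ closure Ω := fun x hx => hincl x (by
      have := hx.2; rwa [mem_closedBall, dist_eq_norm] at this)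
    have husub : UpperSemicontinuousOn (fun x => u x + -φ x) K :=
      (husc.mono hKsub).add (hφc.continuous.neg.upperSemicontinuous.upperSemicontinuousOn K)
    have hKne : K.Nonempty :=
      ⟨x₀, show R / 2 ≤ ‖x₀ - y‖ by linarith, by rw [mem_closedBall, dist_eq_norm, hn0]⟩
    obtain ⟨z, hz, hmax⟩ := UpperSemicontinuousOn.exists_isMaxOn hKne hKc husub
    have hzle : u z ≤ φ z := by
      by_contra hcon
      have hcon := not_le.1 hcon
      have hz1 : R / 2 ≤ ‖z - y‖ := hz.1
      have hz2 : ‖z - y‖ ≤ R := by have := hz.2; rwa [mem_closedBall, dist_eq_norm] at this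
      have hz3 : ‖z - y‖ < R := by
        by_contra h
        have := hout z (not_lt.1 h)
        have := hu0 z (hincl z hz2)
        linarith
      have hz4 : R / 2 < ‖z - y‖ := by
        by_contra h
        have hzz := hmax₁ (show z ∈ closedBall y (R / 2) by
          rw [mem_closedBall, dist_eq_norm]; exact not_lt.1 h)
        have hzz : u z ≤ u z₁ := hzz
        have h1 := hlow z
        have h2 : Real.exp (-k * ‖z - y‖ ^ 2) ≤ 1 := by
          apply Real.exp_le_one_iff.2
          nlinarith [sq_nonneg ‖z - y‖]
        have h3 : ε * Real.exp (-k * ‖z - y‖ ^ 2) ≤ ε := by nlinarith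
        linarith
      have hzne : z ≠ x₀ := by rintro rfl; linarith
      have hzΩ : z ∈ Ω := hinΩ z hz2 hzne
      have hloc : IsLocalMaxOn (fun x => u x - φ x) (closure Ω) z := by
        apply Filter.Eventually.filter_mono nhdsWithin_le_nhds
        have hcn : Continuous fun x : EN N => ‖x - y‖ :=
          (continuous_id.sub continuous_const).norm
        filter_upwards [hcn.continuousAt.eventually_lt continuousAt_const hz3,
          continuousAt_const.eventually_lt hcn.continuousAt hz4] with x h1 h2
        have h := hmax (show x ∈ K from ⟨h2.le, by
          rw [mem_closedBall, dist_eq_norm]; exact h1.le⟩)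
        have h : u x + -φ x ≤ u z + -φ z := h
        linarith
      have hbz : ‖b z‖ ≤ B := (hMb z hzΩ).trans ((le_max_left _ _).trans (le_max_left _ _))
      obtain ⟨hg, hs⟩ := barrier_strict hα hF1 hF2 y R k ε B C hR hε hB hC hk1 hk2 z
        (subset_closure hzΩ) hz1 hz2 (b z) hbz
      have hvis := hint z hzΩ φ hφc hloc hg
      have hczero : c z * |u z| ^ α * u z
          ≤ C * (ε * Real.exp (-k * ‖z - y‖ ^ 2)) ^ (1 + α) := by
        have huz : u z < 0 := hneg z (hin z hz2 hzne)
        have hua : 0 < |u z| := abs_pos.2 huz.ne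
        have hcz : |c z| ≤ C := (hMc z hzΩ).trans (le_max_left _ _)
        calc c z * |u z| ^ α * u z ≤ |c z * |u z| ^ α * u z| := le_abs_self _
          _ = |c z| * |u z| ^ (1 + α) := by
            rw [abs_mul, abs_mul, abs_of_pos (Real.rpow_pos_of_pos hua α), Real.rpow_add hua,
              Real.rpow_one]
            ring
          _ ≤ C * (ε * Real.exp (-k * ‖z - y‖ ^ 2)) ^ (1 + α) := by
            apply mul_le_mul hcz _ (by positivity) hC
            apply Real.rpow_le_rpow hua.le _ (by linarith)
            rw [abs_of_neg huz]
            have := hlow z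
            linarith
      linarith
    intro x h1 h2
    have h := hmax (show x ∈ K from ⟨h1, by rw [mem_closedBall, dist_eq_norm]; exact h2⟩)
    have h : u x + -φ x ≤ u z + -φ z := h
    linarith
  have hφ0 : φ x₀ = 0 := by simp [hφ, barrier, hn0]
  have hbx : ‖b x₀‖ ≤ B := (le_max_right _ _).trans (le_max_left _ _)
  obtain ⟨hg, hs⟩ := barrier_strict hα hF1 hF2 y R k ε B C hR hε hB hC hk1 hk2 x₀
    hx₀ (by linarith) hn0.le (b x₀) hbx
  refine ⟨φ, hφc, ?_, hg, ?_, ?_⟩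
  · have hcn : Continuous fun x : EN N => ‖x - y‖ := (continuous_id.sub continuous_const).norm
    have hev : ∀ᶠ x in 𝓝[closure Ω] x₀, R / 2 < ‖x - y‖ :=
      (continuousAt_const.eventually_lt hcn.continuousAt
        (by rw [hn0]; linarith)).filter_mono nhdsWithin_le_nhds
    filter_upwards [hev, self_mem_nhdsWithin] with x hx hxΩ
    rw [hux₀, hφ0, sub_zero]
    rcases le_total ‖x - y‖ R with h | h
    · linarith [hcomp x hx.le h]
    · linarith [hout x h, hu0 x hxΩ]
  · refine ⟨2 * k * (ε * Real.exp (-k * ‖x₀ - y‖ ^ 2)) * (1 / 2), by positivity, ?_⟩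
    rw [mul_smul, ← hx₀y]
    exact gradient_barrier y R k ε x₀
  · have : 0 ≤ C * (ε * Real.exp (-k * ‖x₀ - y‖ ^ 2)) ^ (1 + α) := by positivity
    linarith

/-! ### Geometry of the domain -/

/-- At a boundary point touched by an interior ball, the radial direction is strictly exterior:
otherwise the direction `-(x₀ - y) + ∇ρ(x₀)` would enter the ball while increasing `ρ`. -/
lemma inner_gradient_pos {N : ℕ} (ρ : EN N → ℝ) (x₀ y : EN N) (R : ℝ) (hR : 0 < R)
    (hd : DifferentiableAt ℝ ρ x₀) (h0 : ρ x₀ = 0) (hg : gradient ρ x₀ ≠ 0)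
    (hxy : ‖x₀ - y‖ = R) (hneg : ∀ x ∈ ball y R, ρ x < 0) :
    0 < ⟪x₀ - y, gradient ρ x₀⟫ := by
  by_contra hcon
  have hcon := not_lt.1 hcon
  set g := gradient ρ x₀ with hgdef
  set w := -(x₀ - y) + g with hw
  have hgpos : 0 < ‖g‖ := norm_pos_iff.2 hg
  have hwx : ⟪x₀ - y, w⟫ < 0 := by
    rw [hw, inner_add_right, inner_neg_right, real_inner_self_eq_norm_sq, hxy]
    nlinarith
  have hwg : 0 < ⟪g, w⟫ := by
    rw [hw, inner_add_right, inner_neg_right, real_inner_self_eq_norm_sq, real_inner_comm]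
    have : 0 < ‖g‖ ^ 2 := by positivity
    linarith
  have hline : HasDerivAt (fun t : ℝ => x₀ + t • w) w 0 := by
    simpa using ((hasDerivAt_id (0 : ℝ)).smul_const w).const_add x₀
  have hder : HasDerivAt (fun t : ℝ => ρ (x₀ + t • w)) ⟪g, w⟫ 0 := by
    have h1 : HasFDerivAt ρ (InnerProductSpace.toDual ℝ (EN N) g) (x₀ + (0 : ℝ) • w) := by
      rw [zero_smul, add_zero]
      exact hasGradientAt_iff_hasFDerivAt.1 hd.hasGradientAt
    exact h1.comp_hasDerivAt (0 : ℝ) hline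
  have hpos : ∀ᶠ t in 𝓝[>] (0 : ℝ), 0 < ρ (x₀ + t • w) := by
    have ht := hder.tendsto_slope_zero_right
    filter_upwards [ht.eventually (lt_mem_nhds hwg), self_mem_nhdsWithin] with t h1 h2
    have h2 : 0 < t := h2
    simp only [zero_add, zero_smul, add_zero, h0, sub_zero, smul_eq_mul] at h1
    exact (mul_pos_iff_of_pos_left (inv_pos.2 h2)).1 h1
  have hin : ∀ᶠ t in 𝓝[>] (0 : ℝ), 2 * ⟪x₀ - y, w⟫ + t * ‖w‖ ^ 2 < 0 := by
    apply Filter.Eventually.filter_mono nhdsWithin_le_nhds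
    have : ContinuousAt (fun t : ℝ => 2 * ⟪x₀ - y, w⟫ + t * ‖w‖ ^ 2) 0 := by fun_prop
    exact this.eventually_lt continuousAt_const (by simp; linarith)
  obtain ⟨t, ⟨h1, h2⟩, h3⟩ := ((hpos.and hin).and self_mem_nhdsWithin).exists
  have h3 : 0 < t := h3
  have hmem : x₀ + t • w ∈ ball y R := by
    rw [mem_ball, dist_eq_norm]
    apply lt_of_pow_lt_pow_left₀ 2 hR.le
    have e : x₀ + t • w - y = (x₀ - y) + t • w := by abel
    rw [e, norm_add_sq_real, hxy, inner_smul_right, norm_smul, Real.norm_of_nonneg h3.le]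
    nlinarith
  linarith [hneg _ hmem]

/-- If an open subset `U` of a connected open set `Ω` is nonempty and proper, some ball in `U`
has a point of `Ω ∖ U` on its boundary sphere. -/
lemma exists_touching_ball {N : ℕ} {Ω U : Set (EN N)} (hΩ : IsOpen Ω) (hc : IsPreconnected Ω)
    (hU : IsOpen U) (hUΩ : U ⊆ Ω) (hne : U.Nonempty) (hprop : (Ω \ U).Nonempty) :
    ∃ y R x₀, 0 < R ∧ x₀ ∈ Ω \ U ∧ ‖x₀ - y‖ = R ∧ ball y R ⊆ U := by
  obtain ⟨z, hzΩU, hzcl⟩ : ∃ z ∈ Ω \ U, z ∈ closure U := by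
    by_contra hcon
    push Not at hcon
    obtain ⟨v, hvU⟩ := hne
    obtain ⟨w, hwΩ, hwU⟩ := hprop
    have hsub : Ω ⊆ U := hc.subset_left_of_subset_union hU
      (isClosed_closure (s := U)).isOpen_compl
      (disjoint_compl_right.mono_left subset_closure)
      (fun x hx => by
        by_cases h : x ∈ U
        · exact Or.inl h
        · exact Or.inr (hcon x ⟨hx, h⟩)) ⟨v, hUΩ hvU, hvU⟩
    exact hwU (hsub hwΩ)
  obtain ⟨r, hr, hrΩ⟩ := Metric.isOpen_iff.1 hΩ z hzΩU.1
  obtain ⟨y, hyU, hyz⟩ := Metric.mem_closure_iff.1 hzcl (r / 2) (by positivity)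
  have hKc : IsCompact (closedBall y (dist z y) ∩ Uᶜ) :=
    (isCompact_closedBall _ _).inter_right hU.isClosed_compl
  obtain ⟨x₀, hx₀, hmin⟩ := hKc.exists_isMinOn (f := fun x => dist x y)
    ⟨z, mem_closedBall.2 le_rfl, hzΩU.2⟩ (by fun_prop)
  have hx₀d : dist x₀ y ≤ dist z y := mem_closedBall.1 hx₀.1
  have hx₀Ω : x₀ ∈ Ω := hrΩ (by
    rw [mem_ball]
    linarith [dist_triangle x₀ y z, dist_comm y z])
  refine ⟨y, dist x₀ y, x₀, ?_, ⟨hx₀Ω, hx₀.2⟩, (dist_eq_norm _ _).symm, ?_⟩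
  · apply dist_pos.2
    rintro rfl
    exact hx₀.2 hyU
  · intro x hx
    by_contra hxU
    have hx : dist x y < dist x₀ y := hx
    have h : dist x₀ y ≤ dist x y :=
      hmin (show x ∈ closedBall y (dist z y) ∩ Uᶜ from ⟨mem_closedBall.2 (by linarith), hxU⟩)
    linarith

/-- Proposition `p2`: strong maximum principle. A non-positive subsolution
of the boundary value problem with `f(x,0) ≥ 0` is either identically zero or negative on `Ω̄`. -/
theorem stmt5 {N : ℕ} (Ω : Set (EN N)) (nv : EN N → EN N)
    (hΩ : IsC1Domain Ω nv) (hsp : InteriorSphereCond Ω)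
    (α a A C₁ θ : ℝ) (hα : -1 < α)
    (F : EN N → EN N → Mat N → ℝ)
    (hF1 : CondF1 Ω α F) (hF2 : CondF2 Ω α a A F) (hF3 : CondF3 Ω α C₁ θ F)
    (b : EN N → EN N) (c : EN N → ℝ)
    (hbc : ContinuousOn b Ω) (hb : ∃ M, ∀ x ∈ Ω, ‖b x‖ ≤ M)
    (hcc : ContinuousOn c Ω) (hcb : ∃ M, ∀ x ∈ Ω, |c x| ≤ M)
    (f : EN N → ℝ → ℝ) (hf : ∀ x ∈ frontier Ω, 0 ≤ f x 0)
    (u : EN N → ℝ) (husc : UpperSemicontinuousOn u (closure Ω))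
    (hu0 : ∀ x ∈ closure Ω, u x ≤ 0)
    (hsub : IsSubSol Ω F b α (fun x r => c x * |r| ^ α * r) (fun _ => 0)
      (fun x r p => f x r + ⟪p, nv x⟫) u) :
    (∀ x ∈ closure Ω, u x = 0) ∨ (∀ x ∈ closure Ω, u x < 0) := by
  obtain ⟨hΩo, hΩc, -, ρ, hρ, hΩρ, hfρ, hρn⟩ := hΩ
  obtain ⟨hint, -, hbd, -⟩ := hsub
  have hopf := hopf_touching hα hF1 hF2 b c hb hcb u husc hu0 hint
  set U : Set (EN N) := {x | x ∈ Ω ∧ u x < 0} with hUdef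
  have hUo : IsOpen U := by
    rw [isOpen_iff_mem_nhds]
    rintro x ⟨hxΩ, hux⟩
    have h1 : ∀ᶠ z in 𝓝[closure Ω] x, u z < 0 := husc x (subset_closure hxΩ) 0 hux
    have h2 : ∀ᶠ z in 𝓝[Ω] x, u z < 0 := h1.filter_mono (nhdsWithin_mono x subset_closure)
    rw [hΩo.nhdsWithin_eq hxΩ] at h2
    filter_upwards [h2, hΩo.mem_nhds hxΩ] with z hz1 hz2 using ⟨hz2, hz1⟩
  by_cases hUne : U.Nonempty
  · right
    have hUΩ : ∀ x ∈ Ω, u x < 0 := by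
      by_contra hcon
      push Not at hcon
      obtain ⟨w, hwΩ, hw⟩ := hcon
      obtain ⟨y, R, x₀, hR, hx₀, hxy, hball⟩ := exists_touching_ball hΩo hΩc.isPreconnected hUo
        (fun x hx => hx.1) hUne ⟨w, hwΩ, fun h => absurd h.2 (not_lt.2 hw)⟩
      have hux₀ : u x₀ = 0 := le_antisymm (hu0 x₀ (subset_closure hx₀.1))
        (not_lt.1 fun h => hx₀.2 ⟨hx₀.1, h⟩)
      obtain ⟨φ, hφ, hloc, hg, -, hlt⟩ := hopf x₀ (subset_closure hx₀.1) hux₀ y R hR hxy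
        (fun x hx => (hball hx).1) (fun x hx => (hball hx).2)
      have h := hint x₀ hx₀.1 φ hφ hloc hg
      simp only [hux₀, mul_zero, add_zero] at h
      linarith
    intro x₀ hx₀cl
    by_cases hx₀Ω : x₀ ∈ Ω
    · exact hUΩ x₀ hx₀Ω
    by_contra hcon
    have hux₀ : u x₀ = 0 := le_antisymm (hu0 x₀ hx₀cl) (not_lt.1 hcon)
    have hx₀f : x₀ ∈ frontier Ω := by
      rw [hΩo.frontier_eq]; exact ⟨hx₀cl, hx₀Ω⟩
    obtain ⟨R, hR, y, -, hxy, hball⟩ := hsp x₀ hx₀f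
    obtain ⟨φ, hφ, hloc, hg, ⟨t, ht, hgt⟩, hlt⟩ := hopf x₀ hx₀cl hux₀ y R hR hxy hball
      (fun x hx => hUΩ x (hball hx))
    have hρ0 : ρ x₀ = 0 := by rw [hfρ] at hx₀f; exact hx₀f
    obtain ⟨hgρ, hnv⟩ := hρn x₀ hx₀f
    have hpos := inner_gradient_pos ρ x₀ y R hR (hρ.differentiable one_ne_zero x₀) hρ0 hgρ hxy
      (fun x hx => by have := hball hx; rw [hΩρ] at this; exact this)
    have hnpos : 0 < ⟪gradient φ x₀, nv x₀⟫ := by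
      rw [hgt, hnv, inner_smul_left, inner_smul_right]
      have := inv_pos.2 (norm_pos_iff.2 hgρ)
      simp only [conj_trivial]
      positivity
    have h := hbd x₀ hx₀f φ hφ hloc hg
    simp only [hux₀, mul_zero, add_zero] at h
    have hf0 := hf x₀ hx₀f
    rcases min_le_iff.1 h with h | h <;> linarith
  · left
    have hΩ0 : ∀ x ∈ Ω, u x = 0 := fun x hx => le_antisymm (hu0 x (subset_closure hx))
      (not_lt.1 fun h => hUne ⟨x, hx, h⟩)
    intro x hx
    refine le_antisymm (hu0 x hx) (not_lt.1 fun hlt => ?_)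
    have h1 : ∀ᶠ z in 𝓝[closure Ω] x, u z < 0 := husc x hx 0 hlt
    have h2 : ∀ᶠ z in 𝓝[Ω] x, u z < 0 := h1.filter_mono (nhdsWithin_mono x subset_closure)
    have : (𝓝[Ω] x).NeBot := mem_closure_iff_nhdsWithin_neBot.1 hx
    obtain ⟨z, hz1, hz2⟩ := (h2.and self_mem_nhdsWithin).exists
    exact hz1.ne (hΩ0 z hz2)
end
end

section
/- Let v ∈ LSC(Ω̄) be a viscosity supersolution of F(x,Dv,D²v) + b(x)·Dv|Dv|^α − β(v(x)) = g(x) in Ω with the Neumann condition ⟨Dv,n⟩ = 0 on ∂Ω, where g, β ∈ USC(Ω̄). Suppose x̄ ∈ Ω̄ is a strict local minimum of x ↦ v(x) + C|x − x̄|^q e^{−k d(x)}, where C > 0, k > q/(2r) with r the radius in the uniform exterior sphere condition, and q > max{2, (α+2)/(α+1)}. Suppose moreover that v is not locally constant around x̄. Then −β(v(x̄)) ≤ g(x̄). -/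
/-!
Write `Φ_z(x) = C |x - z|^q e^{-k d(x)}` (`penal`).

*Jumps.* Near any boundary point of a `C²` domain, nearby points of the closure are joined to a
fixed point by two segments lying in the closure (`exists_two_segments`). Since `q > 1`, a bound
`|v x - v y| ≤ c |x - y|^q` near `xb` would make `v` constant along segments, hence locally
constant. So there are `z_n, t_n → xb` with `v(t_n) + Φ_{z_n}(t_n) < v(z_n)` (`exists_jump`).

*Minimizers.* Let `y_n` minimize `v + Φ_{z_n}` over a small closed ball intersected with the
closure. The jump gives `y_n ≠ z_n`; strictness of the minimum at `xb` and lower semicontinuity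
give `y_n → xb` and `v(y_n) → v(xb)`.

*Touching.* Away from `z_n`, `-Φ_{z_n}` lies above a concave paraboloid touching it at `y_n`, with
slope of order `|y_n - z_n|^{q-1}` and opening of order `|y_n - z_n|^{q-2}` (`penal_touch`). Hence
quadratic test functions suffice.

*The boundary is excluded.* If `y_n ∈ ∂Ω`, then the exterior sphere condition, the inequality
`⟨Dd, n⟩ ≤ -1` and `k > q/(2r)` make the slope of the paraboloid point strictly inwards. One may
then add `K ⟨n, x - y_n⟩²` with `K` arbitrarily large and still touch from below. By uniform
ellipticity the equation fails for large `K`, and so does the Neumann inequality (`boundary_test`).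

*Interior points.* There the equation gives `-β(v(y_n)) ≤ g(y_n) + W |y_n - z_n|^κ` with
`κ = (q-1)(α+1) - 1`, which is positive because `q > (α+2)/(α+1)` (`interior_test`, `error_bound`,
`local_estimate`). The conclusion follows by letting `n → ∞`, since `g` and `β` are upper
semicontinuous.
-/

open Filter Set Metric
open scoped RealInnerProductSpace Topology NNReal

noncomputable section

/-! ### Quadratic test functions -/

/-- The quadratic `x ↦ ⟨p, x - y⟩ - s |x - y|² + K ⟨n, x - y⟩²` based at `y`. -/
def quadTest {N : ℕ} (p n : EN N) (s K : ℝ) (y x : EN N) : ℝ :=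
  ⟪p, x - y⟫ - s * ‖x - y‖ ^ 2 + K * ⟪n, x - y⟫ ^ 2

lemma contDiff_quadTest {N : ℕ} (p n : EN N) (s K : ℝ) (y : EN N) :
    ContDiff ℝ 2 (quadTest p n s K y) := by
  unfold quadTest
  refine ContDiff.add (ContDiff.sub ?_ ?_) ?_
  · exact contDiff_const.inner ℝ (contDiff_id.sub contDiff_const)
  · exact contDiff_const.mul ((contDiff_id.sub contDiff_const).norm_sq ℝ)
  · exact contDiff_const.mul ((contDiff_const.inner ℝ (contDiff_id.sub contDiff_const)).pow 2)

lemma hasFDerivAt_quadTest {N : ℕ} (p n : EN N) (s K : ℝ) (y x : EN N) :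
    HasFDerivAt (quadTest p n s K y)
      (innerSL ℝ p - (2 * s) • innerSL ℝ (x - y) + (2 * K * ⟪n, x - y⟫) • innerSL ℝ n) x := by
  have hid : HasFDerivAt (fun x : EN N => x - y) (ContinuousLinearMap.id ℝ (EN N)) x :=
    (hasFDerivAt_id x).sub_const y
  have hin : ∀ w : EN N, HasFDerivAt (fun x : EN N => ⟪w, x - y⟫) (innerSL ℝ w) x := fun w => by
    exact ((innerSL ℝ w).hasFDerivAt.comp x hid).congr_fderiv (by ext; simp)
  have h2 := (hid.norm_sq).const_mul s
  have h3 := ((hin n).pow 2).const_mul K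
  refine (((hin p).sub h2).add h3).congr_fderiv ?_
  ext m
  simp
  ring

lemma gradient_quadTest {N : ℕ} (p n : EN N) (s K : ℝ) (y : EN N) :
    gradient (quadTest p n s K y) y = p := by
  apply HasGradientAt.gradient
  rw [hasGradientAt_iff_hasFDerivAt]
  refine (hasFDerivAt_quadTest p n s K y y).congr_fderiv ?_
  ext m
  simp

lemma hess_quadTest {N : ℕ} (p n : EN N) (s K : ℝ) (y : EN N) :
    hess (quadTest p n s K y) y =
      (-(2 * s)) • (1 : Mat N) + (2 * K) • Matrix.vecMulVec (fun i => n i) (fun i => n i) := by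
  have hf : fderiv ℝ (quadTest p n s K y) = fun x =>
      innerSL ℝ p - (2 * s) • innerSL ℝ (x - y) + (2 * K * ⟪n, x - y⟫) • innerSL ℝ n :=
    funext fun x => (hasFDerivAt_quadTest p n s K y x).fderiv
  have hid : HasFDerivAt (fun x : EN N => x - y) (ContinuousLinearMap.id ℝ (EN N)) y :=
    (hasFDerivAt_id y).sub_const y
  have hin : HasFDerivAt (fun x : EN N => ⟪n, x - y⟫) (innerSL ℝ n) y := by
    exact ((innerSL ℝ n).hasFDerivAt.comp y hid).congr_fderiv (by ext; simp)
  have h1 : HasFDerivAt (fun x : EN N => innerSL ℝ (x - y)) (innerSL ℝ) y := by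
    exact ((innerSL ℝ).hasFDerivAt.comp y hid).congr_fderiv (by ext; simp)
  have h2 := ((hasFDerivAt_const (innerSL ℝ p) y).sub (h1.const_smul (2 * s))).add
    ((hin.const_mul (2 * K)).smul_const (innerSL ℝ n))
  ext i j
  rw [hess, Matrix.of_apply, iteratedFDeriv_two_apply, hf]
  erw [h2.fderiv]
  simp [Matrix.vecMulVec_apply, Matrix.one_apply, EuclideanSpace.inner_single_right,
    mul_assoc, eq_comm]
  erw [innerSL_apply_apply]
  simp [EuclideanSpace.inner_single_right, eq_comm]

/-! ### The supersolution property tested with quadratics -/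

/-- At an interior point, a paraboloid with opening `s` and slope `p ≠ 0` touching `v` from below
yields the equation up to the error produced by ellipticity and by the drift. -/
lemma interior_test {N : ℕ} {Ω : Set (EN N)} {nv : EN N → EN N} {α a A : ℝ}
    {F : EN N → EN N → Mat N → ℝ} (hF2 : CondF2 Ω α a A F)
    (hF0 : ∀ x ∈ closure Ω, ∀ p : EN N, p ≠ 0 → F x p 0 = 0)
    {b : EN N → EN N} {β : ℝ → ℝ} {g v : EN N → ℝ}
    (hsup : IsSuperSol Ω F b α (fun _ r' => -(β r')) g (BNeu nv) v)
    {y : EN N} (hy : y ∈ Ω) {p : EN N} (hp : p ≠ 0) {s : ℝ} (hs : 0 ≤ s)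
    (htest : ∀ᶠ x in 𝓝[closure Ω] y, v y + ⟪p, x - y⟫ - s * ‖x - y‖ ^ 2 ≤ v x) :
    -(β (v y)) ≤ g y + A * ‖p‖ ^ α * (2 * s * N) + ‖b y‖ * ‖p‖ * ‖p‖ ^ α := by
  have h := hsup.1 y hy (quadTest p 0 s 0 y) (contDiff_quadTest p 0 s 0 y)
    (by
      filter_upwards [htest] with x hx
      simp only [quadTest]
      simp
      linarith)
    (by rwa [gradient_quadTest])
  rw [gradient_quadTest, hess_quadTest] at h
  have hyc := subset_closure hy
  have hpsd : ((2 * s) • (1 : Mat N)).PosSemidef :=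
    Matrix.PosSemidef.one.smul (by positivity)
  have hell := (hF2.2.2 y hyc p hp ((-(2 * s)) • (1 : Mat N)) ((2 * s) • (1 : Mat N))
    (by simp [Matrix.IsSymm]) hpsd).2
  have h0 : (-(2 * s)) • (1 : Mat N) + (2 * s) • (1 : Mat N) = 0 := by
    rw [← add_smul]; simp
  rw [h0, hF0 y hyc p hp] at hell
  simp at hell h
  have hb : -(‖b y‖ * ‖p‖) ≤ ⟪b y, p⟫ := (abs_le.mp (abs_real_inner_le_norm (b y) p)).1
  have hpα : 0 ≤ ‖p‖ ^ α := by positivity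
  nlinarith [mul_le_mul_of_nonneg_right hb hpα]

/-- At a boundary point no paraboloid with slope pointing strictly inwards touches `v` from below.
Since `K ⟨n, x - y⟩²` may be added with `K` arbitrarily large, at the price of reducing the
normal slope, the equation would be violated there. The exterior sphere controls the points of
`closure Ω` lying on the outer side of the tangent plane. -/
lemma boundary_test {N : ℕ} {Ω : Set (EN N)} {nv : EN N → EN N} {α a A : ℝ}
    {F : EN N → EN N → Mat N → ℝ} (hF2 : CondF2 Ω α a A F)
    {b : EN N → EN N} {β : ℝ → ℝ} {g v : EN N → ℝ}
    (hsup : IsSuperSol Ω F b α (fun _ r' => -(β r')) g (BNeu nv) v)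
    {r : ℝ} (hr : 0 < r)
    {y : EN N} (hy : y ∈ frontier Ω) (hn : ‖nv y‖ = 1)
    (hext : ∀ x ∈ closure Ω, ⟪nv y, x - y⟫ ≤ ‖x - y‖ ^ 2 / (2 * r))
    {p : EN N} (hp : ⟪p, nv y⟫ < 0) {s : ℝ}
    (htest : ∀ᶠ x in 𝓝[closure Ω] y, v y + ⟪p, x - y⟫ - s * ‖x - y‖ ^ 2 ≤ v x) :
    False := by
  obtain ⟨σ, hσ⟩ : ∃ σ, σ = -⟪p, nv y⟫ / 2 := ⟨_, rfl⟩
  have hσ0 : 0 < σ := by linarith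
  set p' := p + σ • nv y with hp'
  have hp'n : ⟪p', nv y⟫ = -σ := by
    rw [hp', inner_add_left, inner_smul_left, real_inner_self_eq_norm_sq, hn]
    simp; linarith
  have hp'0 : p' ≠ 0 := by
    intro h0; rw [h0] at hp'n; simp at hp'n; linarith
  set s' := s + (σ + 1) / (2 * r) with hs'
  have hp'pos : 0 < ‖p'‖ ^ α := Real.rpow_pos_of_pos (norm_pos_iff.mpr hp'0) _
  have hyc := frontier_subset_closure hy
  set R := g y - (F y p' ((-(2 * s')) • (1 : Mat N)) + ⟪b y, p'⟫ * ‖p'‖ ^ α + -(β (v y))) with hR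
  have ha := hF2.1
  -- `K` is so large that the term `a |p'|^α (2 K)` beats the remaining ones
  obtain ⟨K, hK0, hK⟩ : ∃ K > 0, R < a * ‖p'‖ ^ α * (2 * K) := by
    refine ⟨(|R| + 1) / (a * ‖p'‖ ^ α), by positivity, ?_⟩
    have : a * ‖p'‖ ^ α * (2 * ((|R| + 1) / (a * ‖p'‖ ^ α))) = 2 * (|R| + 1) := by
      field_simp
    rw [this]
    linarith [le_abs_self R, abs_nonneg R]
  have h := hsup.2.2.1 y hy (quadTest p' (nv y) s' K y) (contDiff_quadTest _ _ _ _ _)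
    (by
      have hnear : ∀ᶠ x in 𝓝[closure Ω] y, ‖x - y‖ < min (σ / K) (1 / K) := by
        refine mem_nhdsWithin_of_mem_nhds ?_
        refine mem_of_superset (Metric.ball_mem_nhds y (ε := min (σ / K) (1 / K))
          (by positivity)) fun x hx => ?_
        simpa [dist_eq_norm] using hx
      filter_upwards [htest, hnear, self_mem_nhdsWithin] with x hx hxn hxc
      have e := hext x hxc
      have hτ := abs_le.mp (abs_real_inner_le_norm (nv y) (x - y))
      rw [hn, one_mul] at hτ
      have h1 : K * ‖x - y‖ < σ := by
        have := lt_of_lt_of_le hxn (min_le_left _ _)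
        rwa [lt_div_iff₀ hK0, mul_comm] at this
      have h2 : K * ‖x - y‖ < 1 := by
        have := lt_of_lt_of_le hxn (min_le_right _ _)
        rwa [lt_div_iff₀ hK0, mul_comm] at this
      simp only [quadTest, hp', hs', inner_add_left, inner_smul_left]
      simp
      set τ := ⟪nv y, x - y⟫
      set H := ‖x - y‖
      have key : σ * τ + K * τ ^ 2 ≤ (σ + 1) / (2 * r) * H ^ 2 := by
        rcases le_total τ 0 with h0 | h0
        · have : K * (-τ) ≤ σ := by nlinarith
          have : 0 ≤ (σ + 1) / (2 * r) * H ^ 2 := by positivity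
          nlinarith
        · have h3 : K * τ ≤ 1 := by nlinarith
          have h4 : (σ + 1) * τ ≤ (σ + 1) * (H ^ 2 / (2 * r)) := by gcongr
          have h5 : (σ + 1) / (2 * r) * H ^ 2 = (σ + 1) * (H ^ 2 / (2 * r)) := by ring
          nlinarith
      nlinarith)
    (by rwa [gradient_quadTest])
  rw [gradient_quadTest, hess_quadTest] at h
  have hpsd : ((2 * K) • Matrix.vecMulVec (fun i => nv y i) (fun i => nv y i)).PosSemidef :=
    (Matrix.posSemidef_vecMulVec_self_star (fun i => nv y i)).smul (by positivity)
  have htr : ((2 * K) • Matrix.vecMulVec (fun i => nv y i) (fun i => nv y i)).trace = 2 * K := by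
    have h1 : ‖nv y‖ ^ 2 = 1 := by rw [hn]; norm_num
    rw [EuclideanSpace.real_norm_sq_eq] at h1
    rw [Matrix.trace_smul, Matrix.trace_vecMulVec, dotProduct]
    simp only [← pow_two, h1]
    simp
  have hell := (hF2.2.2 y hyc p' hp'0 ((-(2 * s')) • (1 : Mat N)) _
    (by simp [Matrix.IsSymm]) hpsd).1
  rw [htr] at hell
  rw [le_max_iff] at h
  rcases h with h | h
  · linarith
  · simp only [BNeu, hp'n] at h
    linarith

/-! ### Geometry of the domain -/

lemma norm_normal_eq_one {N : ℕ} {Ω : Set (EN N)} {nv : EN N → EN N} {ρ : EN N → ℝ}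
    (hρ : IsC2DefiningFun Ω nv ρ) {y : EN N} (hy : y ∈ frontier Ω) : ‖nv y‖ = 1 := by
  obtain ⟨h0, h1⟩ := hρ.2.2.2 y hy
  rw [h1, norm_smul, norm_inv, norm_norm]
  exact inv_mul_cancel₀ (norm_ne_zero_iff.mpr h0)

lemma definingFun_nonpos {N : ℕ} {Ω : Set (EN N)} {nv : EN N → EN N} {ρ : EN N → ℝ}
    (hρ : IsC2DefiningFun Ω nv ρ) {x : EN N} (hx : x ∈ closure Ω) : ρ x ≤ 0 := by
  have hcl : IsClosed {x | ρ x ≤ 0} := isClosed_le hρ.1.continuous continuous_const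
  refine closure_minimal (fun z hz => ?_) hcl hx
  rw [hρ.2.1] at hz
  exact le_of_lt (mem_ofPred_eq ▸ hz)

/-- Strict differentiability of the defining function at a boundary point. -/
lemma definingFun_strict {N : ℕ} {Ω : Set (EN N)} {nv : EN N → EN N} {ρ : EN N → ℝ}
    (hρ : IsC2DefiningFun Ω nv ρ) {y : EN N} (hy : y ∈ frontier Ω) :
    ∃ G > 0, ∀ ε > 0, ∃ R > 0, ∀ x ∈ ball y R, ∀ w ∈ ball y R,
      |ρ x - ρ w - G * ⟪nv y, x - w⟫| ≤ ε * ‖x - w‖ := by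
  obtain ⟨h0, h1⟩ := hρ.2.2.2 y hy
  refine ⟨‖gradient ρ y‖, norm_pos_iff.mpr h0, fun ε hε => ?_⟩
  have hs : HasStrictFDerivAt ρ (fderiv ℝ ρ y) y :=
    (hρ.1.contDiffAt (x := y)).hasStrictFDerivAt (by norm_num)
  have h2 := hs.isLittleO.bound hε
  rw [nhds_prod_eq, Metric.nhds_basis_ball.prod_self.eventually_iff] at h2
  obtain ⟨R, hR, h3⟩ := h2
  refine ⟨R, hR, fun x hx w hw => ?_⟩
  have h4 := h3 (x := (x, w)) ⟨hx, hw⟩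
  have h5 : fderiv ℝ ρ y (x - w) = ‖gradient ρ y‖ * ⟪nv y, x - w⟫ := by
    rw [← toDual_gradient, InnerProductSpace.toDual_apply_apply, h1, inner_smul_left]
    have := norm_ne_zero_iff.mpr h0
    simp
    field_simp
  simpa [h5] using h4

lemma exterior_sphere {N : ℕ} {Ω : Set (EN N)} {nv : EN N → EN N} {r : ℝ} (hr : 0 < r)
    {y : EN N} (hn : ‖nv y‖ = 1) (hext : Metric.ball (y + r • nv y) r ∩ Ω = ∅)
    {x : EN N} (hx : x ∈ closure Ω) : ⟪nv y, x - y⟫ ≤ ‖x - y‖ ^ 2 / (2 * r) := by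
  have hd : Disjoint (Metric.ball (y + r • nv y) r) (closure Ω) :=
    (disjoint_iff_inter_eq_empty.mpr hext).closure_right isOpen_ball
  have h1 : r ≤ ‖(x - y) - r • nv y‖ := by
    by_contra hlt
    refine disjoint_left.mp hd ?_ hx
    rw [mem_ball, dist_eq_norm, ← sub_sub]
    exact not_le.mp hlt
  have h2 : r ^ 2 ≤ ‖(x - y) - r • nv y‖ ^ 2 := by gcongr
  rw [norm_sub_sq_real, norm_smul, hn, inner_smul_right, Real.norm_of_nonneg hr.le,
    real_inner_comm] at h2
  rw [le_div_iff₀ (by positivity)]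
  nlinarith

/-- The derivative of the distance function in the exterior normal direction is at most `-1`:
near `y` the distance to `∂Ω` of `y - t n` is at least `t - o(t)`, because `ρ` is strictly
differentiable at `y`. -/
lemma inner_gradient_dist_le {N : ℕ} {Ω : Set (EN N)} {nv : EN N → EN N} {ρ : EN N → ℝ}
    (hρ : IsC2DefiningFun Ω nv ρ) {d : EN N → ℝ} (hd : ContDiff ℝ 2 d)
    (hdist : ∃ U : Set (EN N), IsOpen U ∧ frontier Ω ⊆ U ∧
      ∀ x ∈ U ∩ closure Ω, d x = Metric.infDist x (frontier Ω))
    {y : EN N} (hy : y ∈ frontier Ω) : ⟪gradient d y, nv y⟫ ≤ -1 := by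
  by_contra! hcon
  obtain ⟨U, hU, hfU, hdU⟩ := hdist
  obtain ⟨G, hG, hstrict⟩ := definingFun_strict hρ hy
  have hn := norm_normal_eq_one hρ hy
  obtain ⟨l, hl1, hl2⟩ : ∃ l, max (-⟪gradient d y, nv y⟫) 0 < l ∧ l < 1 :=
    exists_between (max_lt (by linarith) one_pos)
  have hl0 : 0 < l := lt_of_le_of_lt (le_max_right _ _) hl1
  have hll : -⟪gradient d y, nv y⟫ < l := lt_of_le_of_lt (le_max_left _ _) hl1
  have hε : 0 < G * (1 - l) / 4 := by
    have : 0 < 1 - l := by linarith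
    positivity
  obtain ⟨R, hR, hR'⟩ := hstrict _ hε
  set ε := G * (1 - l) / 4 with hεdef
  have hdy : d y = 0 := by
    rw [hdU y ⟨hfU hy, frontier_subset_closure hy⟩, infDist_zero_of_mem hy]
  have hline : HasDerivAt (fun t : ℝ => y - t • nv y) (-nv y) 0 := by
    simpa using ((hasDerivAt_id (0 : ℝ)).smul_const (nv y)).const_sub y
  have hder : HasDerivAt (fun t : ℝ => d (y - t • nv y)) (-⟪gradient d y, nv y⟫) 0 := by
    have hdd : HasFDerivAt d (fderiv ℝ d y) (y - (0 : ℝ) • nv y) := by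
      simpa using (hd.differentiable (by norm_num) y).hasFDerivAt
    have := hdd.comp_hasDerivAt (0 : ℝ) hline
    rw [← toDual_gradient, InnerProductSpace.toDual_apply_apply, inner_neg_right] at this
    exact this
  have hev1 : ∀ᶠ t in 𝓝[>] (0 : ℝ), d (y - t • nv y) < l * t := by
    have h1 := hasDerivWithinAt_iff_tendsto_slope'
      (by simp) |>.mp (hder.hasDerivWithinAt (s := Ioi 0))
    have h2 := h1.eventually (gt_mem_nhds hll)
    filter_upwards [h2, self_mem_nhdsWithin] with t ht ht0
    rw [slope_def_field] at ht
    simp only [zero_smul, sub_zero, hdy] at ht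
    rwa [div_lt_iff₀ ht0] at ht
  have hev2 : ∀ᶠ t in 𝓝[>] (0 : ℝ), y - t • nv y ∈ U := by
    refine mem_nhdsWithin_of_mem_nhds (hline.continuousAt.eventually ?_)
    simpa using hU.mem_nhds (hfU hy)
  have hev3 : ∀ᶠ t in 𝓝[>] (0 : ℝ), t < R / 2 :=
    mem_nhdsWithin_of_mem_nhds (gt_mem_nhds (by positivity))
  obtain ⟨t, ht1, htU, htR, ht0⟩ := (hev1.and (hev2.and (hev3.and self_mem_nhdsWithin))).exists
  set x := y - t • nv y with hx
  have hyx : y - x = t • nv y := by rw [hx]; abel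
  have hnyx : ‖y - x‖ = t := by rw [hyx, norm_smul, hn, Real.norm_of_nonneg ht0.le, mul_one]
  have hxR : x ∈ ball y R := by
    rw [mem_ball, dist_comm, dist_eq_norm, hnyx]; linarith
  have hy0 : ρ y = 0 := by have := hy; rw [hρ.2.2.1] at this; exact this
  have h1 := (abs_le.mp (hR' y (mem_ball_self hR) x hxR)).1
  rw [hnyx, hyx, inner_smul_right, real_inner_self_eq_norm_sq, hn, hy0] at h1
  have hεG : ε < G := by rw [hεdef]; nlinarith [mul_pos hG hl0]
  have hρx : ρ x < 0 := by nlinarith [mul_pos (sub_pos.mpr hεG) ht0]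
  have hxΩ : x ∈ Ω := by rw [hρ.2.1]; exact hρx
  obtain ⟨w, hw, hxw⟩ := isClosed_frontier.exists_infDist_eq_dist ⟨y, hy⟩ x
  rw [← hdU x ⟨htU, subset_closure hxΩ⟩, dist_comm, dist_eq_norm] at hxw
  have hwt : ‖w - x‖ < t := by rw [← hxw]; nlinarith
  have hwR : w ∈ ball y R := by
    have : dist w y ≤ dist w x + dist x y := dist_triangle _ _ _
    rw [dist_comm x y, dist_eq_norm w x, dist_eq_norm y x, hnyx] at this
    rw [mem_ball]; linarith
  have hw0 : ρ w = 0 := by have := hw; rw [hρ.2.2.1] at this; exact this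
  have h2 := (abs_le.mp (hR' w hwR x hxR)).2
  have h3 : ⟪nv y, w - x⟫ ≤ ‖w - x‖ := by
    simpa [hn] using real_inner_le_norm (nv y) (w - x)
  rw [hw0] at h2
  have h4 : (G - ε) * t ≤ (G + ε) * (l * t) := by
    have : (G - ε) * t ≤ (G + ε) * ‖w - x‖ := by nlinarith
    refine this.trans ?_
    rw [← hxw]
    gcongr
  have h5 : (G + ε) * l < G - ε := by rw [hεdef]; nlinarith [mul_pos hG (by linarith : 0 < 1 - l)]
  nlinarith

/-- Points of `closure Ω` close to `xb` can be joined to a common centre by two consecutive segments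
inside `closure Ω ∩ ball xb ε`: the first one follows the interior normal at `xb`. -/
lemma exists_two_segments {N : ℕ} {Ω : Set (EN N)} {nv : EN N → EN N} (hΩo : IsOpen Ω)
    {ρ : EN N → ℝ} (hρ : IsC2DefiningFun Ω nv ρ) {xb : EN N} (hxb : xb ∈ closure Ω)
    {ε : ℝ} (hε : 0 < ε) :
    ∃ ε' > 0, ∃ c : EN N, ∀ x ∈ ball xb ε' ∩ closure Ω, ∃ x' : EN N,
      segment ℝ x x' ⊆ ball xb ε ∩ closure Ω ∧ segment ℝ x' c ⊆ ball xb ε ∩ closure Ω := by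
  by_cases hin : xb ∈ Ω
  · obtain ⟨ε', hε', hb⟩ := Metric.isOpen_iff.mp (hΩo.inter isOpen_ball) xb
      (⟨hin, mem_ball_self hε⟩ : xb ∈ Ω ∩ ball xb ε)
    have hsub : ball xb ε' ⊆ ball xb ε ∩ closure Ω := fun z hz =>
      ⟨(hb hz).2, subset_closure (hb hz).1⟩
    refine ⟨ε', hε', xb, fun x hx => ⟨x, ?_, ?_⟩⟩
    · exact ((convex_ball xb ε').segment_subset hx.1 hx.1).trans hsub
    · exact ((convex_ball xb ε').segment_subset hx.1 (mem_ball_self hε')).trans hsub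
  · have hf : xb ∈ frontier Ω := ⟨hxb, by rwa [hΩo.interior_eq]⟩
    obtain ⟨G, hG, hstrict⟩ := definingFun_strict hρ hf
    have hn := norm_normal_eq_one hρ hf
    obtain ⟨R, hR, hR'⟩ := hstrict (G / 2) (by positivity)
    set m := min R ε with hm
    have hm0 : 0 < m := lt_min hR hε
    have hmove : ∀ x ∈ closure Ω, x ∈ ball xb R → ∀ t : ℝ, 0 < t → x - t • nv xb ∈ ball xb R →
        x - t • nv xb ∈ Ω := by
      intro x hxc hxR t ht htR
      have h1 := (abs_le.mp (hR' _ htR x hxR)).2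
      have h2 : x - t • nv xb - x = -(t • nv xb) := by abel
      rw [h2, norm_neg, norm_smul, hn, inner_neg_right, inner_smul_right,
        real_inner_self_eq_norm_sq, hn, Real.norm_of_nonneg ht.le] at h1
      have h3 := definingFun_nonpos hρ hxc
      rw [hρ.2.1]
      show ρ _ < 0
      nlinarith
    have hball : ∀ x ∈ ball xb (m / 2), ∀ t : ℝ, 0 ≤ t → t ≤ m / 2 →
        x - t • nv xb ∈ ball xb m := by
      intro x hx t ht0 ht
      rw [mem_ball, dist_eq_norm] at hx ⊢
      have h1 : x - t • nv xb - xb = (x - xb) - t • nv xb := by abel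
      have h2 := norm_sub_le (x - xb) (t • nv xb)
      rw [norm_smul, hn, Real.norm_of_nonneg ht0] at h2
      rw [h1]
      linarith
    set c := xb - (m / 2) • nv xb with hc
    have hcm : c ∈ ball xb m := hball xb (mem_ball_self (by positivity)) _ (by positivity) le_rfl
    have hcΩ : c ∈ Ω := hmove xb hxb (mem_ball_self hR) _ (by positivity)
      (ball_subset_ball (min_le_left _ _) hcm)
    obtain ⟨e, he, hb⟩ := Metric.isOpen_iff.mp (hΩo.inter isOpen_ball) c
      (⟨hcΩ, hcm⟩ : c ∈ Ω ∩ ball xb m)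
    refine ⟨min e (m / 2), by positivity, c, fun x hx => ⟨x - (m / 2) • nv xb, ?_, ?_⟩⟩
    · have hxm : x ∈ ball xb (m / 2) := ball_subset_ball (min_le_right _ _) hx.1
      intro z hz
      rw [segment_eq_image'] at hz
      obtain ⟨θ, hθ, rfl⟩ := hz
      have hz' : x + θ • (x - (m / 2) • nv xb - x) = x - (θ * (m / 2)) • nv xb := by
        rw [mul_smul]; module
      simp only [hz']
      have hmem := hball x hxm (θ * (m / 2)) (by have := hθ.1; positivity)
        (by nlinarith [hθ.2])
      refine ⟨ball_subset_ball (min_le_right _ _) hmem, ?_⟩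
      rcases hθ.1.eq_or_lt with h0 | h0
      · simpa [← h0] using hx.2
      · exact subset_closure (hmove x hx.2
          (ball_subset_ball ((half_le_self hm0.le).trans (min_le_left _ _)) hxm) _ (by positivity)
          (ball_subset_ball (min_le_left _ _) hmem))
    · have hx' : x - (m / 2) • nv xb ∈ ball c e := by
        have h1 := ball_subset_ball (min_le_left e (m / 2)) hx.1
        rw [mem_ball, dist_eq_norm] at h1 ⊢
        have : x - (m / 2) • nv xb - c = x - xb := by rw [hc]; abel
        rwa [this]
      refine ((convex_ball c e).segment_subset hx' (mem_ball_self he)).trans fun z hz => ?_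
      exact ⟨ball_subset_ball (min_le_right _ _) (hb hz).2, subset_closure (hb hz).1⟩

/-- A function which is Hölder continuous with exponent larger than one along a segment takes the
same value at both ends. -/
lemma eq_of_holder_on_segment {N : ℕ} {S : Set (EN N)} {v : EN N → ℝ} {c q : ℝ} (hq : 1 < q)
    (hv : ∀ x ∈ S, ∀ y ∈ S, |v x - v y| ≤ c * ‖x - y‖ ^ q) {x y : EN N}
    (hS : segment ℝ x y ⊆ S) : v x = v y := by
  let f : ℝ → ℝ := fun t => v (x + t • (y - x))
  have hmem : ∀ t ∈ Icc (0 : ℝ) 1, x + t • (y - x) ∈ S := fun t ht => hS (by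
    rw [segment_eq_image']; exact ⟨t, ht, rfl⟩)
  have hf : ∀ t ∈ Icc (0 : ℝ) 1, ∀ u ∈ Icc (0 : ℝ) 1,
      |f t - f u| ≤ (c * ‖y - x‖ ^ q) * |t - u| ^ q := by
    intro t ht u hu
    have h1 := hv _ (hmem t ht) _ (hmem u hu)
    have h2 : x + t • (y - x) - (x + u • (y - x)) = (t - u) • (y - x) := by module
    rw [h2, norm_smul, Real.mul_rpow (norm_nonneg _) (norm_nonneg _), Real.norm_eq_abs] at h1
    calc |f t - f u| ≤ _ := h1
      _ = _ := by ring
  have hder : ∀ u ∈ Icc (0 : ℝ) 1, HasDerivWithinAt f 0 (Icc 0 1) u := by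
    intro u hu
    rw [hasDerivWithinAt_iff_isLittleO]
    have hO : (fun t => f t - f u - (t - u) • (0 : ℝ)) =O[𝓝[Icc 0 1] u]
        (fun t => |t - u| ^ q) := by
      refine Asymptotics.IsBigO.of_bound (c * ‖y - x‖ ^ q) ?_
      filter_upwards [self_mem_nhdsWithin] with t ht
      have := hf t ht u hu
      simpa [abs_of_nonneg (Real.rpow_nonneg (abs_nonneg (t - u)) q)] using this
    refine hO.trans_isLittleO (Asymptotics.IsLittleO.mono ?_ nhdsWithin_le_nhds)
    rw [Asymptotics.isLittleO_iff]
    intro ε hε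
    have hlim : Tendsto (fun t : ℝ => |t - u| ^ (q - 1)) (𝓝 u) (𝓝 0) := by
      have hc : Continuous fun t : ℝ => |t - u| ^ (q - 1) :=
        (continuous_abs.comp (continuous_id.sub continuous_const)).rpow_const
          fun _ => Or.inr (by linarith)
      have := hc.tendsto u
      simpa [Real.zero_rpow (by linarith : q - 1 ≠ 0)] using this
    filter_upwards [hlim.eventually (gt_mem_nhds hε)] with t ht
    rw [Real.norm_eq_abs, abs_of_nonneg (by positivity), Real.norm_eq_abs]
    have : |t - u| ^ q = |t - u| ^ (q - 1) * |t - u| := by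
      rw [← Real.rpow_add_one' (abs_nonneg _) (by linarith)]; congr 1; ring
    rw [this]
    exact mul_le_mul_of_nonneg_right ht.le (abs_nonneg _)
  have hconst := constant_of_derivWithin_zero (fun u hu => (hder u hu).differentiableWithinAt)
    (fun u hu => (hder u (Ico_subset_Icc_self hu)).derivWithin
      (uniqueDiffOn_Icc zero_lt_one u (Ico_subset_Icc_self hu))) 1 (right_mem_Icc.mpr zero_le_one)
  simpa [f] using hconst.symm

/-! ### The penalization `C |x - z|^q e^{-k d(x)}` -/

/-- The penalization `C |x - z|^q e^{-k d(x)}` centred at `z`. -/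
def penal {N : ℕ} (d : EN N → ℝ) (C q k : ℝ) (z x : EN N) : ℝ :=
  C * ‖x - z‖ ^ q * Real.exp (-k * d x)

lemma exists_taylor_lower {N : ℕ} {d : EN N → ℝ} (hd : ContDiff ℝ 2 d) (xb : EN N) :
    ∃ D ≥ 0, ∃ R > 0, ∀ x ∈ ball xb R, ∀ y ∈ ball xb R,
      d y + ⟪gradient d y, x - y⟫ - D * ‖x - y‖ ^ 2 ≤ d x := by
  have h1 : ContDiff ℝ 1 (fderiv ℝ d) := hd.fderiv_right (by norm_num)
  obtain ⟨K, t, ht, hK⟩ := h1.contDiffAt.exists_lipschitzOnWith (x := xb)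
  obtain ⟨R, hR, hRt⟩ := Metric.mem_nhds_iff.mp ht
  refine ⟨K, K.2, R, hR, fun x hx y hy => ?_⟩
  have hseg : segment ℝ y x ⊆ ball xb R := (convex_ball xb R).segment_subset hy hx
  have h2 := (convex_segment (𝕜 := ℝ) y x).norm_image_sub_le_of_norm_fderiv_le' (f := d)
    (φ := fderiv ℝ d y) (C := K * ‖x - y‖)
    (fun w _ => hd.differentiable (by norm_num) w)
    (fun w hw => by
      have h3 := hK.norm_sub_le (hRt (hseg hw)) (hRt hy)
      refine h3.trans ?_
      have : ‖w - y‖ ≤ ‖x - y‖ := by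
        rw [segment_eq_image'] at hw
        obtain ⟨θ, hθ, rfl⟩ := hw
        simp only [add_sub_cancel_left, norm_smul, Real.norm_of_nonneg hθ.1]
        exact mul_le_of_le_one_left (norm_nonneg _) hθ.2
      gcongr)
    (left_mem_segment ℝ y x) (right_mem_segment ℝ y x)
  rw [← toDual_gradient, InnerProductSpace.toDual_apply_apply, Real.norm_eq_abs] at h2
  have := (abs_le.mp h2).1
  nlinarith

/-- Near `y ≠ z` the penalization lies below a paraboloid touching it at `y`, whose opening is of
order `|y - z|^(q-2)`. Writing the penalization as the exponential of
`q log |x - z| - k d(x)`, this follows from concavity of the logarithm and from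
`e^w ≤ 1 + w + w²`. -/
lemma penal_touch {N : ℕ} {d : EN N → ℝ} {C q k D R : ℝ} (hC : 0 < C) (hq : 0 < q) (hk : 0 < k)
    (hD : 0 ≤ D) {xb : EN N}
    (hT : ∀ x ∈ ball xb R, ∀ y ∈ ball xb R,
      d y + ⟪gradient d y, x - y⟫ - D * ‖x - y‖ ^ 2 ≤ d x)
    {y z : EN N} (hy : y ∈ ball xb R) (hyz : y ≠ z) (hu1 : ‖y - z‖ ≤ 1)
    (hgrad : ‖gradient d y‖ ≤ 1) :
    ∀ᶠ x in 𝓝 y, penal d C q k z x ≤ penal d C q k z y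
      + ⟪penal d C q k z y • ((q / ‖y - z‖ ^ 2) • (y - z) - k • gradient d y), x - y⟫
      + penal d C q k z y * ((q + k * D + 4 * (q + k) ^ 2) / ‖y - z‖ ^ 2) * ‖x - y‖ ^ 2 := by
  set u := ‖y - z‖ with hu
  have hu0 : 0 < u := norm_pos_iff.mpr (sub_ne_zero.mpr hyz)
  set E := (q + k * D) / u ^ 2 with hE
  set l := (q + k) / u with hl
  have hE0 : 0 < E := by positivity
  have hl0 : 0 < l := by positivity
  set L := (q / u ^ 2) • (y - z) - k • gradient d y with hL
  have hLn : ‖L‖ ≤ l := by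
    have h1 : ‖L‖ ≤ q / u + k := by
      refine (norm_sub_le _ _).trans ?_
      rw [norm_smul, norm_smul, ← hu, Real.norm_of_nonneg hk.le,
        Real.norm_of_nonneg (by positivity)]
      have : q / u ^ 2 * u = q / u := by field_simp
      rw [this]
      nlinarith
    refine h1.trans ?_
    rw [hl, add_div]
    have : k ≤ k / u := by rw [le_div_iff₀ hu0]; nlinarith
    linarith
  have hev : ∀ᶠ x in 𝓝 y, ‖x - y‖ < min (l / E) (1 / (2 * l)) := by
    refine mem_of_superset (Metric.ball_mem_nhds y (ε := min (l / E) (1 / (2 * l)))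
      (by positivity)) fun x hx => ?_
    simpa [dist_eq_norm] using hx
  filter_upwards [hev, isOpen_ball.mem_nhds hy, isOpen_ne.mem_nhds hyz] with x hx hxR hxz
  have hxz0 : 0 < ‖x - z‖ := norm_pos_iff.mpr (sub_ne_zero.mpr hxz)
  have hpy : 0 < penal d C q k z y := by unfold penal; positivity
  have hfac : penal d C q k z x = penal d C q k z y *
      Real.exp (q * (Real.log ‖x - z‖ - Real.log u) - k * (d x - d y)) := by
    simp only [penal]
    rw [← hu, Real.rpow_def_of_pos hxz0, Real.rpow_def_of_pos hu0, mul_assoc, mul_assoc C,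
      mul_assoc C, ← Real.exp_add, ← Real.exp_add, ← Real.exp_add]
    congr 2
    ring
  set H := ‖x - y‖ with hH
  have hH0 : 0 ≤ H := norm_nonneg _
  set w := ⟪L, x - y⟫ + E * H ^ 2 with hw
  have hexpo : q * (Real.log ‖x - z‖ - Real.log u) - k * (d x - d y) ≤ w := by
    have h1 : Real.log (‖x - z‖ ^ 2 / u ^ 2) ≤ ‖x - z‖ ^ 2 / u ^ 2 - 1 :=
      Real.log_le_sub_one_of_pos (by positivity)
    rw [Real.log_div (by positivity) (by positivity), Real.log_pow, Real.log_pow] at h1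
    have h2 : ‖x - z‖ ^ 2 = u ^ 2 + 2 * ⟪y - z, x - y⟫ + H ^ 2 := by
      have : x - z = (y - z) + (x - y) := by abel
      rw [this, norm_add_sq_real]
    rw [h2] at h1
    have h3 := hT x hxR y hy
    rw [← hH] at h3
    have h4 : ⟪L, x - y⟫ = q / u ^ 2 * ⟪y - z, x - y⟫ - k * ⟪gradient d y, x - y⟫ := by
      rw [hL, inner_sub_left, inner_smul_left, inner_smul_left]; simp
    have h5 : (u ^ 2 + 2 * ⟪y - z, x - y⟫ + H ^ 2) / u ^ 2 - 1
        = 2 * (⟪y - z, x - y⟫ / u ^ 2) + H ^ 2 / u ^ 2 := by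
      field_simp; ring
    rw [h5] at h1
    push_cast at h1
    have h6 : k * D * H ^ 2 ≤ k * D / u ^ 2 * H ^ 2 := by
      have hu2 : u ^ 2 ≤ 1 := pow_le_one₀ hu0.le hu1
      have : k * D ≤ k * D / u ^ 2 := by
        rw [le_div_iff₀ (by positivity)]
        exact mul_le_of_le_one_right (by positivity) hu2
      gcongr
    have h7 : 0 ≤ q * (H ^ 2 / u ^ 2) := by positivity
    have h8 : E * H ^ 2 = q * (H ^ 2 / u ^ 2) + k * D / u ^ 2 * H ^ 2 := by rw [hE]; ring
    have h9 : q / u ^ 2 * ⟪y - z, x - y⟫ = q * (⟪y - z, x - y⟫ / u ^ 2) := by ring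
    have h10 := mul_le_mul_of_nonneg_left h1 hq.le
    have h11 := mul_le_mul_of_nonneg_left h3 hk.le
    rw [hw, h4, h8, h9]
    linarith
  have hH1 : E * H ≤ l := by
    have := (lt_of_lt_of_le hx (min_le_left _ _)).le
    rwa [le_div_iff₀ hE0, mul_comm] at this
  have hH2 : 2 * l * H ≤ 1 := by
    have := (lt_of_lt_of_le hx (min_le_right _ _)).le
    rwa [le_div_iff₀ (by positivity), mul_comm] at this
  have hwabs : |w| ≤ 2 * l * H := by
    have h1 : |⟪L, x - y⟫| ≤ l * H :=
      (abs_real_inner_le_norm _ _).trans (mul_le_mul_of_nonneg_right hLn hH0)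
    have h2 : E * H ^ 2 ≤ l * H := by nlinarith
    have h3 : 0 ≤ E * H ^ 2 := by positivity
    have := abs_le.mp h1
    rw [abs_le]
    constructor <;> linarith
  have hexp : Real.exp w ≤ 1 + w + (2 * l * H) ^ 2 := by
    have h1 := (abs_le.mp (Real.abs_exp_sub_one_sub_id_le (hwabs.trans hH2))).2
    have h2 : w ^ 2 ≤ (2 * l * H) ^ 2 := sq_le_sq' (by linarith [(abs_le.mp hwabs).1])
      (abs_le.mp hwabs).2
    linarith
  have hS : (q + k * D + 4 * (q + k) ^ 2) / u ^ 2 = E + 4 * l ^ 2 := by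
    rw [hE, hl, div_pow]; ring
  rw [hfac, hS, inner_smul_left]
  calc penal d C q k z y * Real.exp (q * (Real.log ‖x - z‖ - Real.log u) - k * (d x - d y))
      ≤ penal d C q k z y * (1 + w + (2 * l * H) ^ 2) := by
        gcongr
        exact (Real.exp_le_exp.mpr hexpo).trans hexp
    _ = _ := by rw [hw]; simp; ring

/-- The error terms of the equation are of order `u^((q-1)(α+1)-1)`, where `T m` is the size of the
slope, `T = c u^(q-1)`, and `T S₀ / u` is the opening of the paraboloid. -/
lemma error_bound {α A q S₀ B n c c₂ u m : ℝ} (hα : -1 < α) (hA : 0 ≤ A) (hq : 0 < q)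
    (hS : 0 ≤ S₀) (hB : 0 ≤ B) (hn : 0 ≤ n) (hc : 0 < c) (hcc : c ≤ c₂) (hu : 0 < u) (hu1 : u ≤ 1)
    (hm1 : q / 2 ≤ m) (hm2 : m ≤ 2 * q) :
    A * (c * u ^ (q - 1) * m) ^ α * (2 * (c * u ^ (q - 1) * (S₀ / u)) * n)
      + B * (c * u ^ (q - 1) * m) * (c * u ^ (q - 1) * m) ^ α
      ≤ (c₂ ^ (α + 1) * ((q / 2) ^ α + (2 * q) ^ α) * (2 * A * S₀ * n + B * (2 * q)))
        * u ^ ((q - 1) * (α + 1) - 1) := by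
  have hm : 0 < m := by linarith
  have hT : 0 < c * u ^ (q - 1) := by positivity
  have hpow : (c * u ^ (q - 1)) ^ α * (c * u ^ (q - 1))
      = c ^ (α + 1) * (u ^ ((q - 1) * (α + 1) - 1) * u) := by
    rw [← Real.rpow_add_one hT.ne', Real.mul_rpow hc.le (by positivity), ← Real.rpow_mul hu.le,
      ← Real.rpow_add_one hu.ne', sub_add_cancel]
  have hmα : m ^ α ≤ (q / 2) ^ α + (2 * q) ^ α := by
    have h1 : 0 ≤ (q / 2) ^ α := by positivity
    have h2 : 0 ≤ (2 * q) ^ α := by positivity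
    rcases le_total 0 α with h | h
    · have := Real.rpow_le_rpow hm.le hm2 h
      linarith
    · have := Real.rpow_le_rpow_of_nonpos (by positivity) hm1 h
      linarith
  have hcα : c ^ (α + 1) ≤ c₂ ^ (α + 1) := Real.rpow_le_rpow hc.le hcc (by linarith)
  rw [Real.mul_rpow hT.le hm.le]
  set T := c * u ^ (q - 1)
  set U := u ^ ((q - 1) * (α + 1) - 1)
  have hU : 0 ≤ U := by positivity
  calc A * (T ^ α * m ^ α) * (2 * (T * (S₀ / u)) * n) + B * (T * m) * (T ^ α * m ^ α)
      = (T ^ α * T) * (m ^ α * (2 * A * S₀ * n / u + B * m)) := by ring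
    _ = c ^ (α + 1) * m ^ α * (2 * A * S₀ * n + B * (m * u)) * U := by
        rw [hpow]; field_simp
    _ ≤ _ := by
        have : m * u ≤ 2 * q := by nlinarith
        have : 0 ≤ c₂ ^ (α + 1) := le_trans (by positivity) hcα
        gcongr

/-! ### The estimate at a touching point and the conclusion -/

/-- If `v` plus the penalization centred at `z` has a local minimum at `y ≠ z`, both points being
close to `xb`, then `y` cannot be on the boundary, and the equation at `y` gives the claimed
inequality up to an error that vanishes as `|y - z| → 0`. -/
lemma local_estimate {N : ℕ} {Ω : Set (EN N)} {nv : EN N → EN N} (hΩo : IsOpen Ω)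
    {ρ : EN N → ℝ} (hρ : IsC2DefiningFun Ω nv ρ) {r : ℝ} (hr : 0 < r)
    (hext : ∀ x ∈ frontier Ω, Metric.ball (x + r • nv x) r ∩ Ω = ∅)
    {d : EN N → ℝ} (hd : ContDiff ℝ 2 d) (hd1 : ∀ x ∈ closure Ω, ‖gradient d x‖ ≤ 1)
    (hdist : ∃ U : Set (EN N), IsOpen U ∧ frontier Ω ⊆ U ∧
      ∀ x ∈ U ∩ closure Ω, d x = Metric.infDist x (frontier Ω))
    {α a A : ℝ} (hα : -1 < α)
    {F : EN N → EN N → Mat N → ℝ} (hF2 : CondF2 Ω α a A F)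
    (hF0 : ∀ x ∈ closure Ω, ∀ p : EN N, p ≠ 0 → F x p 0 = 0)
    {b : EN N → EN N} (hb : ∃ M, ∀ x ∈ Ω, ‖b x‖ ≤ M)
    {β : ℝ → ℝ} {g v : EN N → ℝ}
    (hsup : IsSuperSol Ω F b α (fun _ r' => -(β r')) g (BNeu nv) v)
    (xb : EN N) {C q k : ℝ} (hC : 0 < C) (hq : 0 < q) (hk : q / (2 * r) < k) :
    ∃ W : ℝ, ∃ R > 0, ∀ y ∈ ball xb R ∩ closure Ω, ∀ z ∈ closure Ω, y ≠ z → ‖y - z‖ ≤ R →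
      (∀ᶠ x in 𝓝[closure Ω] y, v y + penal d C q k z y ≤ v x + penal d C q k z x) →
      -(β (v y)) ≤ g y + W * ‖y - z‖ ^ ((q - 1) * (α + 1) - 1) := by
  have hk0 : 0 < k := lt_trans (by positivity) hk
  obtain ⟨D, hD, R₁, hR₁, hT⟩ := exists_taylor_lower hd xb
  obtain ⟨M, hM⟩ := hb
  have hcont : ContinuousAt (fun x => C * Real.exp (-k * d x)) xb :=
    (continuous_const.mul (Real.continuous_exp.comp
      (continuous_const.mul hd.continuous))).continuousAt
  obtain ⟨R₂, hR₂, hc₂⟩ := Metric.eventually_nhds_iff_ball.mp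
    (hcont.eventually (gt_mem_nhds (lt_add_one (C * Real.exp (-k * d xb)))))
  have hA : 0 ≤ A := hF2.1.le.trans hF2.2.1
  set c₂ := C * Real.exp (-k * d xb) + 1
  set S₀ := q + k * D + 4 * (q + k) ^ 2 with hS₀
  have hS₀0 : 0 < S₀ := by positivity
  refine ⟨c₂ ^ (α + 1) * ((q / 2) ^ α + (2 * q) ^ α) * (2 * A * S₀ * N + |M| * (2 * q)),
    min (min R₁ R₂) (min 1 (q / (2 * k))), by positivity, ?_⟩
  rintro y ⟨hyR, hyc⟩ z hz hyz hu hminy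
  have hyR₁ : y ∈ ball xb R₁ := ball_subset_ball ((min_le_left _ _).trans (min_le_left _ _)) hyR
  have hyR₂ : y ∈ ball xb R₂ := ball_subset_ball ((min_le_left _ _).trans (min_le_right _ _)) hyR
  have hu1 : ‖y - z‖ ≤ 1 := hu.trans ((min_le_right _ _).trans (min_le_left _ _))
  have huk : ‖y - z‖ ≤ q / (2 * k) := hu.trans ((min_le_right _ _).trans (min_le_right _ _))
  have htouch := penal_touch hC hq hk0 hD hT hyR₁ hyz hu1 (hd1 y hyc)
  rw [← hS₀] at htouch
  have hpdef : penal d C q k z y = C * ‖y - z‖ ^ q * Real.exp (-k * d y) := rfl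
  set ψ := penal d C q k z y
  set L := (q / ‖y - z‖ ^ 2) • (y - z) - k • gradient d y with hL
  set u := ‖y - z‖ with hudef
  have hu0 : 0 < u := norm_pos_iff.mpr (sub_ne_zero.mpr hyz)
  have hψ0 : 0 < ψ := by rw [hpdef]; positivity
  have htest : ∀ᶠ x in 𝓝[closure Ω] y,
      v y + ⟪-(ψ • L), x - y⟫ - ψ * (S₀ / u ^ 2) * ‖x - y‖ ^ 2 ≤ v x := by
    filter_upwards [hminy, mem_nhdsWithin_of_mem_nhds htouch] with x h1 h2
    rw [inner_neg_left]
    linarith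
  by_cases hyΩ : y ∈ Ω
  · -- interior point: the paraboloid is an admissible test function with nonzero slope
    obtain ⟨c, hc⟩ : ∃ c, c = C * Real.exp (-k * d y) := ⟨_, rfl⟩
    have hc0 : 0 < c := by rw [hc]; positivity
    have hcc : c ≤ c₂ := by rw [hc]; exact (hc₂ y hyR₂).le
    have hψ : ψ = c * u ^ (q - 1) * u := by
      rw [hpdef, hc, mul_assoc _ _ u, ← Real.rpow_add_one hu0.ne', sub_add_cancel]; ring
    have hku : k * u ≤ q / 2 := by
      rw [le_div_iff₀ (by positivity)] at huk
      linarith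
    have hn1 : ‖(q / u ^ 2) • (y - z)‖ * u = q := by
      rw [norm_smul, Real.norm_of_nonneg (by positivity), ← hudef]
      field_simp
    have hn2 : ‖k • gradient d y‖ * u ≤ q / 2 := by
      rw [norm_smul, Real.norm_of_nonneg hk0.le]
      have : k * ‖gradient d y‖ ≤ k * 1 := by gcongr; exact hd1 y hyc
      nlinarith
    have hm1 : q / 2 ≤ ‖L‖ * u := by
      have := mul_le_mul_of_nonneg_right
        (norm_sub_norm_le ((q / u ^ 2) • (y - z)) (k • gradient d y)) hu0.le
      rw [← hL] at this
      linarith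
    have hm2 : ‖L‖ * u ≤ 2 * q := by
      have := mul_le_mul_of_nonneg_right
        (norm_sub_le ((q / u ^ 2) • (y - z)) (k • gradient d y)) hu0.le
      rw [← hL] at this
      linarith
    have hPn : ‖-(ψ • L)‖ = c * u ^ (q - 1) * (‖L‖ * u) := by
      rw [norm_neg, norm_smul, Real.norm_of_nonneg hψ0.le, hψ]; ring
    have hP0 : -(ψ • L) ≠ 0 := by
      rw [← norm_pos_iff, hPn]
      have : 0 < ‖L‖ * u := by linarith
      positivity
    have h1 := interior_test hF2 hF0 hsup hyΩ hP0 (by positivity) htest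
    have hSS : ψ * (S₀ / u ^ 2) = c * u ^ (q - 1) * (S₀ / u) := by
      rw [hψ]; field_simp
    rw [hPn, hSS] at h1
    have h2 := error_bound hα hA hq hS₀0.le (abs_nonneg M) (Nat.cast_nonneg N) hc0 hcc hu0 hu1
      hm1 hm2
    have h3 : ‖b y‖ ≤ |M| := (hM y hyΩ).trans (le_abs_self M)
    have h4 : ‖b y‖ * (c * u ^ (q - 1) * (‖L‖ * u)) * (c * u ^ (q - 1) * (‖L‖ * u)) ^ α
        ≤ |M| * (c * u ^ (q - 1) * (‖L‖ * u)) * (c * u ^ (q - 1) * (‖L‖ * u)) ^ α := by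
      gcongr
    linarith
  · -- boundary point: `k > q / (2 r)` makes the slope point strictly inwards
    have hyf : y ∈ frontier Ω := ⟨hyc, by rwa [hΩo.interior_eq]⟩
    have hn := norm_normal_eq_one hρ hyf
    have hsph := fun x hx => exterior_sphere hr hn (hext y hyf) (x := x) hx
    refine (boundary_test hF2 hsup hr hyf hn hsph ?_ htest).elim
    have h1 := inner_gradient_dist_le hρ hd hdist hyf
    have h2 := hsph z hz
    have h3 : ⟪nv y, z - y⟫ = -⟪y - z, nv y⟫ := by
      rw [real_inner_comm, ← inner_neg_left, neg_sub]
    rw [h3, norm_sub_rev, ← hudef] at h2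
    have h4 : ⟪L, nv y⟫ = q / u ^ 2 * ⟪y - z, nv y⟫ - k * ⟪gradient d y, nv y⟫ := by
      rw [hL, inner_sub_left, inner_smul_left, inner_smul_left]; simp
    have h5 : q / u ^ 2 * (-⟪y - z, nv y⟫) ≤ q / u ^ 2 * (u ^ 2 / (2 * r)) := by gcongr
    have h6 : q / u ^ 2 * (u ^ 2 / (2 * r)) = q / (2 * r) := by field_simp
    have h7 : 0 < ⟪L, nv y⟫ := by rw [h4]; nlinarith
    rw [inner_neg_left, inner_smul_left]
    simp
    positivity

/-- Since `q > 1`, a function that is not locally constant cannot have all its increments near `xb`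
controlled by the penalization. -/
lemma exists_jump {N : ℕ} {Ω : Set (EN N)} {nv : EN N → EN N} (hΩo : IsOpen Ω)
    {ρ : EN N → ℝ} (hρ : IsC2DefiningFun Ω nv ρ) {d : EN N → ℝ} (hd : Continuous d)
    {v : EN N → ℝ} {xb : EN N} (hxb : xb ∈ closure Ω) {C q k : ℝ} (hq : 1 < q)
    (hnc : ∀ ε > (0 : ℝ), ∃ x ∈ Metric.ball xb ε ∩ closure Ω,
      ∃ y ∈ Metric.ball xb ε ∩ closure Ω, v x ≠ v y) {ε : ℝ} (hε : 0 < ε) :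
    ∃ z ∈ ball xb ε ∩ closure Ω, ∃ t ∈ ball xb ε ∩ closure Ω, v t + penal d C q k z t < v z := by
  by_contra! hcon
  have hcont : ContinuousAt (fun x => C * Real.exp (-k * d x)) xb :=
    (continuous_const.mul (Real.continuous_exp.comp (continuous_const.mul hd))).continuousAt
  obtain ⟨R, hR, hc⟩ := Metric.eventually_nhds_iff_ball.mp
    (hcont.eventually (gt_mem_nhds (lt_add_one (C * Real.exp (-k * d xb)))))
  set c := C * Real.exp (-k * d xb) + 1
  have hone : ∀ x ∈ ball xb (min ε R) ∩ closure Ω, ∀ y ∈ ball xb (min ε R) ∩ closure Ω,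
      v x - v y ≤ c * ‖x - y‖ ^ q := by
    intro x hx y hy
    have h1 := hcon x ⟨ball_subset_ball (min_le_left _ _) hx.1, hx.2⟩
      y ⟨ball_subset_ball (min_le_left _ _) hy.1, hy.2⟩
    have h2 := (hc y (ball_subset_ball (min_le_right _ _) hy.1)).le
    have h3 : penal d C q k x y ≤ c * ‖x - y‖ ^ q := by
      rw [penal, norm_sub_rev, mul_right_comm]
      gcongr
    linarith
  have habs : ∀ x ∈ ball xb (min ε R) ∩ closure Ω, ∀ y ∈ ball xb (min ε R) ∩ closure Ω,
      |v x - v y| ≤ c * ‖x - y‖ ^ q := by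
    intro x hx y hy
    rw [abs_le]
    have h1 := hone y hy x hx
    rw [norm_sub_rev] at h1
    exact ⟨by linarith, hone x hx y hy⟩
  obtain ⟨ε', hε', c₀, hseg⟩ := exists_two_segments hΩo hρ hxb (lt_min hε hR)
  have hv : ∀ x ∈ ball xb ε' ∩ closure Ω, v x = v c₀ := by
    intro x hx
    obtain ⟨x', h1, h2⟩ := hseg x hx
    exact (eq_of_holder_on_segment hq habs h1).trans (eq_of_holder_on_segment hq habs h2)
  obtain ⟨x, hx, y, hy, hne⟩ := hnc ε' hε'
  exact hne ((hv x hx).trans (hv y hy).symm)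

lemma continuous_penal {N : ℕ} {d : EN N → ℝ} (hd : Continuous d) {C q k : ℝ} (hq : 0 ≤ q) :
    Continuous fun s : EN N × EN N => penal d C q k s.1 s.2 := by
  unfold penal
  exact (continuous_const.mul ((continuous_snd.sub continuous_fst).norm.rpow_const
    fun _ => Or.inr hq)).mul
    (Real.continuous_exp.comp (continuous_const.mul (hd.comp continuous_snd)))

/-- Lemma `lemxdivy`: if `xb` is a strict local minimum of
`x ↦ v(x) + C|x − xb|^q e^{−k d(x)}` with `k > q/(2r)` and `q > max{2, (α+2)/(α+1)}`,
and `v` is not locally constant around `xb`, then `−β(v(xb)) ≤ g(xb)`. -/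
theorem stmt9 {N : ℕ} (Ω : Set (EN N)) (nv : EN N → EN N) (hΩ : IsC2Domain Ω nv)
    (r : ℝ) (hr : 0 < r)
    (hext : ∀ x ∈ frontier Ω, Metric.ball (x + r • nv x) r ∩ Ω = ∅)
    (d : EN N → ℝ) (hd : ContDiff ℝ 2 d) (hd1 : ∀ x ∈ closure Ω, ‖gradient d x‖ ≤ 1)
    (hdist : ∃ U : Set (EN N), IsOpen U ∧ frontier Ω ⊆ U ∧
      ∀ x ∈ U ∩ closure Ω, d x = Metric.infDist x (frontier Ω))
    (α a A : ℝ) (hα : -1 < α)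
    (F : EN N → EN N → Mat N → ℝ) (hF2 : CondF2 Ω α a A F)
    (hF0 : ∀ x ∈ closure Ω, ∀ p : EN N, p ≠ 0 → F x p 0 = 0)
    (b : EN N → EN N) (hbc : ContinuousOn b Ω) (hb : ∃ M, ∀ x ∈ Ω, ‖b x‖ ≤ M)
    (β : ℝ → ℝ) (hβ : UpperSemicontinuous β)
    (g : EN N → ℝ) (hg : UpperSemicontinuousOn g (closure Ω))
    (v : EN N → ℝ) (hlsc : LowerSemicontinuousOn v (closure Ω))
    (hsup : IsSuperSol Ω F b α (fun _ r' => -(β r')) g (BNeu nv) v)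
    (xb : EN N) (hxb : xb ∈ closure Ω)
    (C q k : ℝ) (hC : 0 < C)
    (hq : max 2 ((α + 2) / (α + 1)) < q) (hk : q / (2 * r) < k)
    (hmin : ∃ δ > (0 : ℝ), ∀ x ∈ closure Ω, x ≠ xb → ‖x - xb‖ < δ →
      v xb < v x + C * ‖x - xb‖ ^ q * Real.exp (-k * d x))
    (hnc : ∀ ε > (0 : ℝ), ∃ x ∈ Metric.ball xb ε ∩ closure Ω,
      ∃ y ∈ Metric.ball xb ε ∩ closure Ω, v x ≠ v y) :
    -(β (v xb)) ≤ g xb := by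
  obtain ⟨hΩo, -, -, ρ, hρ⟩ := hΩ
  have hq2 : 2 < q := (le_max_left _ _).trans_lt hq
  have hα1 : 0 < α + 1 := by linarith
  have hκ : 0 < (q - 1) * (α + 1) - 1 := by
    have h1 := (le_max_right _ _).trans_lt hq
    rw [div_lt_iff₀ hα1] at h1
    linarith
  obtain ⟨W, R, hR, hest⟩ := local_estimate hΩo hρ hr hext hd hd1 hdist hα hF2 hF0 hb hsup xb
    hC (by linarith : 0 < q) hk
  obtain ⟨δ, hδ, hstrict⟩ := hmin
  have hpc : Continuous fun s : EN N × EN N => penal d C q k s.1 s.2 :=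
    continuous_penal hd.continuous (by linarith)
  have hpself : ∀ z, penal d C q k z z = 0 := fun z => by
    simp [penal, Real.zero_rpow (by linarith : q ≠ 0)]
  set K := closedBall xb (δ / 2) ∩ closure Ω with hK
  have hKc : IsCompact K := (isCompact_closedBall xb (δ / 2)).inter_right isClosed_closure
  have hxK : xb ∈ K := ⟨mem_closedBall_self (by positivity), hxb⟩
  -- jumps of `v` at pairs of points converging to `xb`
  have hpos : ∀ n : ℕ, 0 < min (1 / ((n : ℝ) + 1)) (δ / 2) := fun n => by positivity
  choose z hz t ht hzt using fun n : ℕ =>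
    exists_jump (k := k) hΩo hρ hd.continuous hxb (by linarith : 1 < q) hnc (hpos n)
  have hzlim : Tendsto z atTop (𝓝 xb) := by
    rw [tendsto_iff_dist_tendsto_zero]
    refine squeeze_zero (fun _ => dist_nonneg) (fun n => ?_) tendsto_one_div_add_atTop_nhds_zero_nat
    exact (mem_ball.mp (hz n).1).le.trans (min_le_left _ _)
  have hinK : ∀ n x, x ∈ ball xb (min (1 / ((n : ℝ) + 1)) (δ / 2)) ∩ closure Ω → x ∈ K :=
    fun n x hx => ⟨ball_subset_closedBall (ball_subset_ball (min_le_right _ _) hx.1), hx.2⟩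
  have hexmin : ∀ n, ∃ y ∈ K, ∀ x ∈ K,
      v y + penal d C q k (z n) y ≤ v x + penal d C q k (z n) x := by
    intro n
    have hlsc' : LowerSemicontinuousOn (fun x => v x + penal d C q k (z n) x) K :=
      (hlsc.mono inter_subset_right).add
        (hpc.comp (Continuous.prodMk_right (z n))).continuousOn.lowerSemicontinuousOn
    obtain ⟨y, hy, hy'⟩ := hlsc'.exists_isMinOn ⟨xb, hxK⟩ hKc
    exact ⟨y, hy, fun x hx => hy' hx⟩
  choose y hyK hymin using hexmin
  have hyz : ∀ n, y n ≠ z n := by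
    intro n h
    have h1 := hymin n (t n) (hinK n _ (ht n))
    rw [h, hpself] at h1
    linarith [hzt n]
  obtain ⟨ys, hysK, φ, hφ, hφlim⟩ := hKc.tendsto_subseq hyK
  have hzφ : Tendsto (fun n => z (φ n)) atTop (𝓝 xb) := hzlim.comp hφ.tendsto_atTop
  have hyφ : Tendsto (fun n => y (φ n)) atTop (𝓝 ys) := hφlim
  have hyφ' : Tendsto (fun n => y (φ n)) atTop (𝓝[closure Ω] ys) :=
    tendsto_nhdsWithin_iff.mpr ⟨hyφ, Eventually.of_forall fun n => (hyK (φ n)).2⟩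
  have hupper : ∀ n, v (y (φ n)) ≤
      v xb + penal d C q k (z (φ n)) xb - penal d C q k (z (φ n)) (y (φ n)) := fun n => by
    linarith [hymin (φ n) xb hxK]
  have hupperlim : Tendsto
      (fun n => v xb + penal d C q k (z (φ n)) xb - penal d C q k (z (φ n)) (y (φ n))) atTop
      (𝓝 (v xb - penal d C q k xb ys)) := by
    have h1 := (hpc.tendsto (xb, xb)).comp (hzφ.prodMk_nhds tendsto_const_nhds)
    have h2 := (hpc.tendsto (xb, ys)).comp (hzφ.prodMk_nhds hyφ)
    have h3 := (h1.const_add (v xb)).sub h2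
    simpa [hpself] using h3
  -- strictness of the minimum forces the minimizers to converge to `xb`
  have hys : ys = xb := by
    by_contra hne
    have h1 := hstrict ys hysK.2 hne (by
      have := mem_closedBall.mp hysK.1
      rw [dist_eq_norm] at this
      linarith)
    have h2 : v xb - penal d C q k xb ys < v ys := by
      simp only [penal]; linarith
    obtain ⟨e, he1, he2⟩ := exists_between h2
    obtain ⟨n, hn1, hn2⟩ := ((hyφ'.eventually (hlsc ys hysK.2 e he2)).and
      (hupperlim.eventually (gt_mem_nhds he1))).exists
    linarith [hupper n]
  rw [hys] at hyφ hyφ' hupperlim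
  rw [hpself, sub_zero] at hupperlim
  have hvlim : Tendsto (fun n => v (y (φ n))) atTop (𝓝 (v xb)) := by
    rw [tendsto_order]
    refine ⟨fun e he => hyφ'.eventually (hlsc xb hxb e he), fun e he => ?_⟩
    filter_upwards [hupperlim.eventually (gt_mem_nhds he)] with n hn
    exact (hupper n).trans_lt hn
  have hulim : Tendsto (fun n => ‖y (φ n) - z (φ n)‖) atTop (𝓝 0) := by
    simpa using (hyφ.sub hzφ).norm
  have herr : Tendsto (fun n => W * ‖y (φ n) - z (φ n)‖ ^ ((q - 1) * (α + 1) - 1)) atTop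
      (𝓝 0) := by
    have := (hulim.rpow_const (p := (q - 1) * (α + 1) - 1) (Or.inr hκ.le)).const_mul W
    simpa [Real.zero_rpow hκ.ne'] using this
  have hev : ∀ᶠ n in atTop, -(β (v (y (φ n)))) ≤ g (y (φ n))
      + W * ‖y (φ n) - z (φ n)‖ ^ ((q - 1) * (α + 1) - 1) := by
    filter_upwards [hulim.eventually (gt_mem_nhds hR),
      hyφ.eventually (ball_mem_nhds xb hR),
      hyφ.eventually (ball_mem_nhds xb (by positivity : 0 < δ / 2))] with n h1 h2 h3
    refine hest _ ⟨h2, (hyK _).2⟩ _ (hz _).2 (hyz _) h1.le ?_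
    filter_upwards [self_mem_nhdsWithin, mem_nhdsWithin_of_mem_nhds (isOpen_ball.mem_nhds h3)]
      with x hx1 hx2
    exact hymin _ x ⟨ball_subset_closedBall hx2, hx1⟩
  -- passage to the limit by upper semicontinuity of `g` and `β`
  by_contra! hcon
  obtain ⟨e₁, he₁, he₁'⟩ := exists_between hcon
  obtain ⟨e₂, he₂, he₂'⟩ := exists_between he₁'
  have hgev := hyφ'.eventually (hg xb hxb e₁ he₁)
  have hβev := hvlim.eventually (hβ (v xb) (-e₂) (by linarith))
  obtain ⟨n, h1, h2, h3, h4⟩ := (hev.and (hgev.and (hβev.and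
    (herr.eventually (gt_mem_nhds (sub_pos.mpr he₂)))))).exists
  linarith
end
end

section
/- Let X, Y ∈ S(N) be real symmetric N×N matrices and ζ > 0 such that, in the Loewner order on real symmetric 2N×2N matrices, −ζ·I_{2N} ≤ blockDiag(X, −Y) ≤ ζ·[[I, −I], [−I, I]] (where blockDiag(X,−Y) is the block-diagonal matrix with blocks X and −Y, and [[I,−I],[−I,I]] is the symmetric block matrix with identity diagonal blocks and −I off-diagonal blocks). Then for every t ∈ [0,1], X − Y ≤ −(1/(2ζ))(tX + (1−t)Y)². -/
/-!
The quadratic form of the upper bound says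
`⟨X p, p⟩ - ⟨Y q, q⟩ ≤ ζ |p - q|²` for all vectors `p, q`, and the lower bound says
`X ≥ -ζ` and `-Y ≥ -ζ`. Put `Z = t X + (1 - t) Y` and test the upper bound on
`p = v + t a`, `q = v - (1 - t) a`. Since `p - q = a`, this gives
`⟨(X - Y) v, v⟩ + 2 ⟨Z v, a⟩ + t² ⟨X a, a⟩ - (1 - t)² ⟨Y a, a⟩ ≤ ζ |a|²`,
and the lower bound together with `t² + (1 - t)² ≤ 1` turns it into
`⟨(X - Y) v, v⟩ ≤ 2 ζ |a|² - 2 ⟨Z v, a⟩`. The minimizing choice `a = (2ζ)⁻¹ Z v` makes the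
right-hand side `-(2ζ)⁻¹ |Z v|²`, which is the claim.
-/

open Filter Set Metric
open scoped RealInnerProductSpace Topology NNReal

noncomputable section

open Matrix in
/-- Lemma of Barles–Ramaswamy, Lemma `barles`: matrix inequalities in the
Loewner order. -/
theorem stmt10 {N : ℕ} (X Y : Mat N) (hX : X.IsSymm) (hY : Y.IsSymm)
    (ζ : ℝ) (hζ : 0 < ζ)
    (h1 : (Matrix.fromBlocks X 0 0 (-Y) +
      ζ • (1 : Matrix (Fin N ⊕ Fin N) (Fin N ⊕ Fin N) ℝ)).PosSemidef)
    (h2 : (ζ • Matrix.fromBlocks (1 : Mat N) (-1) (-1) (1 : Mat N) -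
      Matrix.fromBlocks X 0 0 (-Y)).PosSemidef) :
    ∀ t ∈ Set.Icc (0 : ℝ) 1,
      (-((2 * ζ)⁻¹ • ((t • X + (1 - t) • Y) * (t • X + (1 - t) • Y))) - (X - Y)).PosSemidef := by
  intro t ht
  obtain ⟨ht0, ht1⟩ := ht
  set Z : Mat N := t • X + (1 - t) • Y with hZ
  have hZs : Z.IsSymm := (hX.smul t).add (hY.smul (1 - t))
  have symm_dot : ∀ {M : Mat N}, M.IsSymm → ∀ u w : Fin N → ℝ,
      u ⬝ᵥ M *ᵥ w = w ⬝ᵥ M *ᵥ u := by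
    intro M hM u w
    rw [dotProduct_mulVec, ← mulVec_transpose, hM.eq, dotProduct_comm]
  have lowX : ∀ a : Fin N → ℝ, 0 ≤ a ⬝ᵥ X *ᵥ a + ζ * (a ⬝ᵥ a) := by
    intro a
    have h := h1.dotProduct_mulVec_nonneg (Sum.elim a 0)
    simpa [add_mulVec, smul_mulVec, fromBlocks_mulVec, sumElim_dotProduct_sumElim] using h
  have lowY : ∀ a : Fin N → ℝ, 0 ≤ -(a ⬝ᵥ Y *ᵥ a) + ζ * (a ⬝ᵥ a) := by
    intro a
    have h := h1.dotProduct_mulVec_nonneg (Sum.elim 0 a)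
    simpa [add_mulVec, smul_mulVec, fromBlocks_mulVec, sumElim_dotProduct_sumElim,
      neg_mulVec] using h
  have up : ∀ p q : Fin N → ℝ,
      p ⬝ᵥ X *ᵥ p - q ⬝ᵥ Y *ᵥ q ≤ ζ * ((p - q) ⬝ᵥ (p - q)) := by
    intro p q
    have h := h2.dotProduct_mulVec_nonneg (Sum.elim p q)
    simp [sub_mulVec, smul_mulVec, fromBlocks_mulVec, sumElim_dotProduct_sumElim,
      neg_mulVec] at h
    simp only [sub_dotProduct, dotProduct_sub]
    linarith [dotProduct_comm p q]
  refine PosSemidef.of_dotProduct_mulVec_nonneg ?_ ?_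
  · have hs : (-((2 * ζ)⁻¹ • (Z * Z)) - (X - Y)).IsSymm := by
      unfold IsSymm
      simp [transpose_mul, hZs.eq, hX.eq, hY.eq]
    simpa [IsHermitian, IsSymm] using hs
  intro v
  -- `c` minimizes the scalar quadratic `2 ζ c² - 2 c`
  set c : ℝ := (2 * ζ)⁻¹ with hc
  have hcz : c * ζ = 1 / 2 := by rw [hc]; field_simp
  have hZv : Z *ᵥ v = t • X *ᵥ v + (1 - t) • Y *ᵥ v := by
    rw [hZ, add_mulVec, smul_mulVec, smul_mulVec]
  set a : Fin N → ℝ := c • Z *ᵥ v with ha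
  have key := up (v + t • a) (v - (1 - t) • a)
  have hpq : v + t • a - (v - (1 - t) • a) = a := by module
  rw [hpq] at key
  simp only [mulVec_add, mulVec_sub, mulVec_smul, add_dotProduct, sub_dotProduct, dotProduct_add,
    dotProduct_sub, smul_dotProduct, dotProduct_smul, smul_eq_mul] at key
  rw [symm_dot hX v a, symm_dot hY v a] at key
  have hcross : a ⬝ᵥ Z *ᵥ v = t * (a ⬝ᵥ X *ᵥ v) + (1 - t) * (a ⬝ᵥ Y *ᵥ v) := by
    rw [hZv, dotProduct_add, dotProduct_smul, dotProduct_smul, smul_eq_mul, smul_eq_mul]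
  have haZ : a ⬝ᵥ Z *ᵥ v = c * (Z *ᵥ v ⬝ᵥ Z *ᵥ v) := by
    rw [ha, smul_dotProduct, smul_eq_mul]
  have haa : ζ * (a ⬝ᵥ a) = c / 2 * (Z *ᵥ v ⬝ᵥ Z *ᵥ v) := by
    rw [ha, smul_dotProduct, dotProduct_smul, smul_eq_mul, smul_eq_mul]
    linear_combination c * (Z *ᵥ v ⬝ᵥ Z *ᵥ v) * hcz
  have hsq : v ⬝ᵥ (Z * Z) *ᵥ v = Z *ᵥ v ⬝ᵥ Z *ᵥ v := by
    rw [← mulVec_mulVec, symm_dot hZs]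
  have haa0 : 0 ≤ ζ * (a ⬝ᵥ a) := by
    have := dotProduct_self_star_nonneg a
    simp only [star_trivial] at this
    positivity
  have e1 := mul_nonneg (sq_nonneg t) (lowX a)
  have e2 := mul_nonneg (sq_nonneg (1 - t)) (lowY a)
  -- `1 - t² - (1 - t)² = 2 t (1 - t)`
  have e3 := mul_nonneg (mul_nonneg ht0 (sub_nonneg.2 ht1)) haa0
  simp only [star_trivial, sub_mulVec, neg_mulVec, smul_mulVec, dotProduct_sub, dotProduct_neg,
    dotProduct_smul, smul_eq_mul, hsq]
  nlinarith [key, hcross, haZ, haa, e1, e2, e3]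
end
end
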